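/- arXiv:1909.04085 — 2 statements merged into one kernel-verified Lean document; each statement's English description precedes it below -/
import Mathlib

section
/- For every t with 0 < t < 1 and every r > 0, the compact set S_t ∩ B̄(0;r) is not polynomially convex; in particular S_t is not locally polynomially convex at the origin. -/
open Complex ComplexConjugate

/-- The polynomially convex hull of a set `K ⊆ ℂ²`. -/
def polyHull2 (K : Set (ℂ × ℂ)) : Set (ℂ × ℂ) :=
  { z | ∀ p : MvPolynomial (Fin 2) ℂ,
      ‖MvPolynomial.eval (fun i => if i = 0 then z.1 else z.2) p‖ ≤
        sSup ((fun w : ℂ × ℂ =>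
          ‖MvPolynomial.eval (fun i => if i = 0 then w.1 else w.2) p‖) '' K) }

/-- A set `K ⊆ ℂ²` is polynomially convex if it equals its polynomially convex hull. -/
def PolyConvex2 (K : Set (ℂ × ℂ)) : Prop := polyHull2 K = K

/-- The closed Euclidean ball of radius `r` centred at the origin in `ℂ²`. -/
def eClosedBall (r : ℝ) : Set (ℂ × ℂ) := { z | ‖z.1‖ ^ 2 + ‖z.2‖ ^ 2 ≤ r ^ 2 }

/-- The open Euclidean ball of radius `r` centred at the origin in `ℂ²`. -/
def eOpenBall (r : ℝ) : Set (ℂ × ℂ) := { z | ‖z.1‖ ^ 2 + ‖z.2‖ ^ 2 < r ^ 2 }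

/-- The surface `S_t = {(z, z²z̄ + t z z̄² + (t²/3) z̄³) : z ∈ ℂ}`. -/
def Sset (t : ℝ) : Set (ℂ × ℂ) :=
  { zw | ∃ z : ℂ, zw = (z, z ^ 2 * conj z + (t : ℂ) * z * (conj z) ^ 2
      + ((t : ℂ) ^ 2 / 3) * (conj z) ^ 3) }

noncomputable def kk (β : ℝ) (μ v : ℂ) (u : ℝ) : ℂ :=
  Complex.exp (μ * u) * ((Real.cosh u : ℂ) + v) ^ (-(β : ℂ))

noncomputable def JJ (β : ℝ) (μ v : ℂ) : ℂ := ∫ u : ℝ, kk β μ v u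

lemma integrable_exp_neg_abs' {c : ℝ} (hc : 0 < c) :
    MeasureTheory.Integrable (fun u : ℝ => Real.exp (-(c * |u|))) := by
  have h := integrableOn_exp_mul_Ioi (a := -c) (by linarith) 0
  have h' := integrableOn_exp_mul_Iic (a := c) hc 0
  rw [← MeasureTheory.integrableOn_univ, ← Set.Iic_union_Ioi (a := (0:ℝ))]
  refine MeasureTheory.IntegrableOn.union (h'.congr_fun (fun x hx => ?_) measurableSet_Iic)
    (h.congr_fun (fun x hx => ?_) measurableSet_Ioi)
  · have : x ≤ 0 := hx
    simp [abs_of_nonpos this]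
  · have : 0 < x := hx
    simp [abs_of_pos this]

lemma exp_abs_le_cosh (u : ℝ) : Real.exp |u| / 2 ≤ Real.cosh u := by
  rw [← Real.cosh_abs, Real.cosh_eq]
  have := Real.exp_pos (-|u|)
  linarith

lemma X_re_lower {v : ℂ} (hv : -(1/2) ≤ v.re) (u : ℝ) :
    Real.exp |u| / 4 ≤ ((Real.cosh u : ℂ) + v).re := by
  have h1 := exp_abs_le_cosh u
  have h2 := Real.one_le_cosh u
  rw [add_re, ofReal_re]
  linarith

lemma X_slit {v : ℂ} (hv : -(1/2) ≤ v.re) (u : ℝ) :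
    ((Real.cosh u : ℂ) + v) ∈ slitPlane := by
  left
  exact lt_of_lt_of_le (by positivity) (X_re_lower hv u)

lemma X_ne {v : ℂ} (hv : -(1/2) ≤ v.re) (u : ℝ) :
    ((Real.cosh u : ℂ) + v) ≠ 0 := slitPlane_ne_zero (X_slit hv u)

lemma kk_norm (β : ℝ) (μ v : ℂ) (u : ℝ) :
    ‖kk β μ v u‖ = Real.exp (μ.re * u) * ‖((Real.cosh u : ℂ) + v)‖ ^ (-β) := by
  unfold kk
  rw [norm_mul, Complex.norm_exp, ← Complex.ofReal_neg, Complex.norm_cpow_real]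
  simp

lemma kk_bound {β : ℝ} (hβ : 0 ≤ β) (μ : ℂ) {v : ℂ} (hv : -(1/2) ≤ v.re) (u : ℝ) :
    ‖kk β μ v u‖ ≤ 4 ^ β * Real.exp (-((β - |μ.re|) * |u|)) := by
  rw [kk_norm]
  have h1 : Real.exp |u| / 4 ≤ ‖((Real.cosh u : ℂ) + v)‖ :=
    (X_re_lower hv u).trans (Complex.re_le_norm _)
  have h2 : ‖((Real.cosh u : ℂ) + v)‖ ^ (-β) ≤ (Real.exp |u| / 4) ^ (-β) :=
    Real.rpow_le_rpow_of_nonpos (by positivity) h1 (by linarith)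
  have h3 : (Real.exp |u| / 4) ^ (-β) = 4 ^ β * Real.exp (-(β * |u|)) := by
    rw [Real.div_rpow (by positivity) (by positivity), ← Real.exp_mul, Real.rpow_neg (by positivity)]
    rw [div_inv_eq_mul, mul_comm]; congr 2; ring
  have h4 : Real.exp (μ.re * u) ≤ Real.exp (|μ.re| * |u|) := by
    rw [← abs_mul]; exact Real.exp_le_exp.2 (le_abs_self _)
  calc _ ≤ Real.exp (|μ.re| * |u|) * (4 ^ β * Real.exp (-(β * |u|))) := by
        rw [← h3]; gcongr
    _ = _ := by
        rw [mul_left_comm, ← Real.exp_add]; congr 2; ring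

lemma kk_cont (β : ℝ) (μ : ℂ) {v : ℂ} (hv : -(1/2) ≤ v.re) : Continuous (kk β μ v) := by
  unfold kk
  refine Continuous.mul (by fun_prop) ?_
  rw [continuous_iff_continuousAt]
  intro u
  refine ContinuousAt.cpow ?_ continuousAt_const (X_slit hv u)
  have := Real.continuous_cosh
  fun_prop

lemma kk_int {β : ℝ} (μ : ℂ) (h : |μ.re| < β) {v : ℂ} (hv : -(1/2) ≤ v.re) :
    MeasureTheory.Integrable (kk β μ v) := by
  refine ((integrable_exp_neg_abs' (sub_pos.2 h)).const_mul (4 ^ β)).mono'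
    (kk_cont β μ hv).aestronglyMeasurable ?_
  exact Filter.Eventually.of_forall fun u => kk_bound ((abs_nonneg _).trans h.le) μ hv u

lemma kk_deriv_v (β : ℝ) (μ : ℂ) {v : ℂ} (hv : -(1/2) ≤ v.re) (u : ℝ) :
    HasDerivAt (fun v => kk β μ v u) (-(β:ℂ) * kk (β+1) μ v u) v := by
  unfold kk
  have h := (((hasDerivAt_id v).const_add (Real.cosh u : ℂ)).cpow_const (c := -(β:ℂ))
    (X_slit hv u)).const_mul (Complex.exp (μ * u))
  refine h.congr_deriv ?_
  push_cast
  rw [show -((β:ℂ)+1) = -(β:ℂ) - 1 by ring]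
  simp; ring

lemma JJ_deriv {β : ℝ} (μ : ℂ) (h : |μ.re| < β) {v : ℂ} (hv : -(1/2) < v.re) :
    HasDerivAt (JJ β μ) (-(β:ℂ) * JJ (β+1) μ v) v := by
  have hβ : 0 ≤ β := (abs_nonneg _).trans h.le
  have key := hasDerivAt_integral_of_dominated_loc_of_deriv_le (μ := MeasureTheory.volume)
    (F := fun v u => kk β μ v u) (F' := fun v u => -(β:ℂ) * kk (β+1) μ v u) (x₀ := v)
    (s := {v : ℂ | -(1/2) < v.re})
    (bound := fun u => β * (4 ^ (β+1) * Real.exp (-((β + 1 - |μ.re|) * |u|))))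
    ((isOpen_lt continuous_const continuous_re).mem_nhds hv)
    (by
      filter_upwards [(isOpen_lt continuous_const continuous_re).mem_nhds hv] with x hx
      exact (kk_cont β μ (le_of_lt hx)).aestronglyMeasurable)
    (kk_int μ h hv.le)
    ((kk_cont (β+1) μ hv.le).aestronglyMeasurable.const_mul _)
    (Filter.Eventually.of_forall fun u x hx => by
      rw [norm_mul]
      refine mul_le_mul (by simp [abs_of_nonneg hβ]) (kk_bound (by linarith) μ (le_of_lt hx) u)
        (norm_nonneg _) hβ)
    (((integrable_exp_neg_abs' (by linarith)).const_mul _).const_mul _)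
    (Filter.Eventually.of_forall fun u x hx => kk_deriv_v β μ (le_of_lt hx) u)
  have := key.2
  rw [MeasureTheory.integral_const_mul] at this
  exact this

lemma JJ_bound {β : ℝ} (μ : ℂ) (h : |μ.re| < β) :
    ∃ M, ∀ v : ℂ, 0 ≤ v.re → ‖JJ β μ v‖ ≤ M ∧
      ∀ γ : ℝ, 0 ≤ γ → ‖v‖ ^ γ * ‖JJ (β + γ) μ v‖ ≤ M := by
  have hβ : 0 ≤ β := (abs_nonneg _).trans h.le
  refine ⟨∫ u : ℝ, 4 ^ β * Real.exp (-((β - |μ.re|) * |u|)), fun v hv => ⟨?_, fun γ hγ => ?_⟩⟩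
  · refine MeasureTheory.norm_integral_le_of_norm_le
      ((integrable_exp_neg_abs' (sub_pos.2 h)).const_mul _) ?_
    exact Filter.Eventually.of_forall fun u => kk_bound hβ μ (by linarith) u
  · rw [← Real.norm_of_nonneg (by positivity : 0 ≤ ‖v‖ ^ γ),
      ← Complex.norm_real (‖v‖ ^ γ : ℝ), ← norm_mul]
    unfold JJ
    rw [← MeasureTheory.integral_const_mul]
    refine MeasureTheory.norm_integral_le_of_norm_le
      ((integrable_exp_neg_abs' (sub_pos.2 h)).const_mul _) ?_
    refine Filter.Eventually.of_forall fun u => ?_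
    refine le_trans ?_ (kk_bound hβ μ (by linarith : -(1/2) ≤ v.re) u)
    have hX : 0 < ‖((Real.cosh u : ℂ) + v)‖ := norm_pos_iff.2 (X_ne (by linarith) u)
    rw [norm_mul, kk_norm, kk_norm, Complex.norm_real, Real.norm_of_nonneg (by positivity),
      neg_add, Real.rpow_add hX]
    have h1 : ‖v‖ ≤ ‖((Real.cosh u : ℂ) + v)‖ := by
      rw [← sq_le_sq₀ (norm_nonneg _) (norm_nonneg _), Complex.sq_norm, Complex.sq_norm,
        normSq_apply, normSq_apply]
      have := Real.cosh_pos u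
      simp only [add_re, ofReal_re, add_im, ofReal_im]
      nlinarith
    have h2 : ‖v‖ ^ γ * ‖((Real.cosh u : ℂ) + v)‖ ^ (-γ) ≤ 1 := by
      rw [Real.rpow_neg hX.le, ← div_eq_mul_inv]
      exact div_le_one_of_le₀ (Real.rpow_le_rpow (norm_nonneg _) h1 hγ) (by positivity)
    calc _ = (Real.exp (μ.re * u) * ‖((Real.cosh u : ℂ) + v)‖ ^ (-β)) *
          (‖v‖ ^ γ * ‖((Real.cosh u : ℂ) + v)‖ ^ (-γ)) := by ring
      _ ≤ (Real.exp (μ.re * u) * ‖((Real.cosh u : ℂ) + v)‖ ^ (-β)) * 1 := by gcongr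
      _ = _ := mul_one _

lemma kk_deriv_u (β : ℝ) (μ : ℂ) {v : ℂ} (hv : -(1/2) ≤ v.re) (u : ℝ) :
    HasDerivAt (fun u => kk β μ v u)
      (μ * kk β μ v u - (β:ℂ) * Real.sinh u * kk (β+1) μ v u) u := by
  unfold kk
  have h0 : HasDerivAt (fun u : ℝ => (u : ℂ)) 1 u := Complex.ofRealCLM.hasDerivAt
  have h1 : HasDerivAt (fun u : ℝ => Complex.exp (μ * u)) (Complex.exp (μ * u) * (μ * 1)) u :=
    (h0.const_mul μ).cexp
  have h2 : HasDerivAt (fun u : ℝ => ((Real.cosh u : ℂ) + v)) (Real.sinh u : ℂ) u :=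
    ((Real.hasDerivAt_cosh u).ofReal_comp).add_const v
  have h3 : HasDerivAt (fun u : ℝ => ((Real.cosh u : ℂ) + v) ^ (-(β:ℂ)))
      ((-(β:ℂ) * ((Real.cosh u : ℂ) + v) ^ (-(β:ℂ) - 1)) * (Real.sinh u : ℂ)) u := by
    have h4 : HasDerivAt (fun X : ℂ => X ^ (-(β:ℂ)))
        (-(β:ℂ) * ((Real.cosh u : ℂ) + v) ^ (-(β:ℂ) - 1)) ((Real.cosh u : ℂ) + v) :=
      ((hasDerivAt_id _).cpow_const (c := -(β:ℂ)) (X_slit hv u)).congr_deriv (by simp)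
    exact HasDerivAt.comp u h4 h2
  refine (h1.mul h3).congr_deriv ?_
  push_cast
  rw [show -((β:ℂ)+1) = -(β:ℂ) - 1 by ring]
  ring

lemma kk_step (β : ℝ) (μ : ℂ) {v : ℂ} (hv : -(1/2) ≤ v.re) (u : ℝ) :
    kk β μ v u = ((Real.cosh u : ℂ) + v) * kk (β+1) μ v u := by
  unfold kk
  rw [ofReal_add, ofReal_one, show -((β:ℂ)+1) = -(β:ℂ) - 1 by ring, cpow_sub _ _ (X_ne hv u),
    cpow_one]
  have := X_ne hv u
  generalize (Real.cosh u : ℂ) + v = X at *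
  field_simp

lemma tendsto_exp_neg_abs {c : ℝ} (hc : 0 < c) (l : Filter ℝ)
    (hl : Filter.Tendsto (fun u : ℝ => |u|) l Filter.atTop) (A : ℝ) :
    Filter.Tendsto (fun u : ℝ => A * Real.exp (-(c * |u|))) l (nhds 0) := by
  have : Filter.Tendsto (fun u : ℝ => Real.exp (-(c * |u|))) l (nhds 0) :=
    Real.tendsto_exp_neg_atTop_nhds_zero.comp (hl.const_mul_atTop hc)
  simpa using this.const_mul A

lemma JJ_rel {β : ℝ} (μ : ℂ) (h : |μ.re| < β) {v : ℂ} (hv : -(1/2) ≤ v.re) :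
    ((β:ℂ)^2 - μ^2) * JJ β μ v - β * (2 * β + 1) * v * JJ (β+1) μ v
      - β * (β + 1) * (1 - v^2) * JJ (β+1+1) μ v = 0 := by
  have hβ : 0 ≤ β := (abs_nonneg _).trans h.le
  set F : ℝ → ℂ := fun u => -(β:ℂ) * (Real.sinh u * kk (β+1) μ v u) - μ * kk β μ v u with hF
  have i0 := kk_int μ h hv
  have i1 := kk_int (β := β+1) μ (by linarith) hv
  have i2 := kk_int (β := β+1+1) μ (by linarith) hv
  have hd : ∀ u, HasDerivAt F (((β:ℂ)^2 - μ^2) * kk β μ v u - β * (2 * β + 1) * v * kk (β+1) μ v u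
      - β * (β + 1) * (1 - v^2) * kk (β+1+1) μ v u) u := by
    intro u
    have hs : HasDerivAt (fun u : ℝ => (Real.sinh u : ℂ)) (Real.cosh u : ℂ) u :=
      (Real.hasDerivAt_sinh u).ofReal_comp
    refine (((hs.mul (kk_deriv_u (β+1) μ hv u)).const_mul (-(β:ℂ))).sub
      ((kk_deriv_u β μ hv u).const_mul μ)).congr_deriv ?_
    rw [kk_step β μ hv u, kk_step (β+1) μ hv u]
    have hcs : (Real.cosh u : ℂ)^2 = (Real.sinh u : ℂ)^2 + 1 := by
      rw [← ofReal_pow, Real.cosh_sq]; push_cast; ring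
    push_cast
    push_cast at hcs
    generalize Complex.cosh (u:ℂ) = C at *
    generalize Complex.sinh (u:ℂ) = S at *
    have hS : S^2 = C^2 - 1 := by rw [hcs]; ring
    ring_nf
    rw [hS]
    ring
  have hbd : ∀ u, ‖F u‖ ≤ (β * 4 ^ (β+1) + ‖μ‖ * 4 ^ β) * Real.exp (-((β - |μ.re|) * |u|)) := by
    intro u
    have hsh : |Real.sinh u| ≤ Real.exp |u| := by
      rw [Real.abs_sinh, Real.sinh_eq]
      have := Real.exp_pos (-|u|)
      have := Real.exp_pos (|u|)
      linarith
    have b1 := kk_bound (β := β+1) (by linarith) μ hv u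
    have b0 := kk_bound hβ μ hv u
    have e : Real.exp |u| * Real.exp (-((β + 1 - |μ.re|) * |u|)) =
        Real.exp (-((β - |μ.re|) * |u|)) := by rw [← Real.exp_add]; congr 1; ring
    calc ‖F u‖ ≤ β * (|Real.sinh u| * ‖kk (β+1) μ v u‖) + ‖μ‖ * ‖kk β μ v u‖ := by
          refine (norm_sub_le _ _).trans (le_of_eq ?_)
          rw [norm_mul, norm_mul, norm_mul, norm_neg, Complex.norm_real, Complex.norm_real,
            Real.norm_of_nonneg hβ, Real.norm_eq_abs]
      _ ≤ β * (Real.exp |u| * (4 ^ (β+1) * Real.exp (-((β + 1 - |μ.re|) * |u|))))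
          + ‖μ‖ * (4 ^ β * Real.exp (-((β - |μ.re|) * |u|))) := by gcongr
      _ = _ := by rw [mul_left_comm (Real.exp |u|), e]; ring
  have lim : ∀ l : Filter ℝ, Filter.Tendsto (fun u : ℝ => |u|) l Filter.atTop →
      Filter.Tendsto F l (nhds 0) := fun l hl =>
    squeeze_zero_norm hbd (tendsto_exp_neg_abs (sub_pos.2 h) l hl _)
  have := MeasureTheory.integral_of_hasDerivAt_of_tendsto hd
    (((i0.const_mul _).sub (i1.const_mul _)).sub (i2.const_mul _))
    (lim _ Filter.tendsto_abs_atBot_atTop) (lim _ Filter.tendsto_abs_atTop_atTop)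
  have i01 : MeasureTheory.Integrable (fun u => ((β:ℂ)^2 - μ^2) * kk β μ v u
    - β * (2 * β + 1) * v * kk (β+1) μ v u) := (i0.const_mul _).sub (i1.const_mul _)
  rw [MeasureTheory.integral_sub i01 (i2.const_mul _),
    MeasureTheory.integral_sub (i0.const_mul _) (i1.const_mul _),
    MeasureTheory.integral_const_mul, MeasureTheory.integral_const_mul,
    MeasureTheory.integral_const_mul] at this
  simpa [JJ] using this

lemma sig_eq (u : ℝ) : Real.sigmoid (2 * u) = Real.exp u / (2 * Real.cosh u) := by
  rw [Real.sigmoid_def, Real.cosh_eq, inv_eq_one_div, div_eq_div_iff (by positivity) (by positivity)]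
  rw [mul_add, ← Real.exp_add, show u + -(2*u) = -u by ring]
  ring

lemma one_sub_sig_eq (u : ℝ) : 1 - Real.sigmoid (2 * u) = Real.exp (-u) / (2 * Real.cosh u) := by
  rw [← Real.sigmoid_neg, ← mul_neg, sig_eq, Real.cosh_neg]

lemma JJ_beta {β : ℝ} (μ : ℂ) (h : |μ.re| < β) :
    (2:ℂ) ^ (1 - (β:ℂ)) * JJ β μ 0 = betaIntegral ((β + μ)/2) ((β - μ)/2) := by
  have hβ : 0 < β := (abs_nonneg _).trans_lt h
  have hd : ∀ u ∈ (Set.univ : Set ℝ), HasDerivWithinAt (fun u => Real.sigmoid (2*u))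
      (Real.sigmoid (2*u) * (1 - Real.sigmoid (2*u)) * 2) Set.univ u := by
    intro u _
    have h1 : HasDerivAt (fun u : ℝ => 2 * u) 2 u := by
      simpa using (hasDerivAt_id u).const_mul 2
    exact ((Real.hasDerivAt_sigmoid (2*u)).comp u h1).hasDerivWithinAt
  have hinj : Set.InjOn (fun u => Real.sigmoid (2*u)) Set.univ := by
    intro a _ b _ hab
    have := Real.sigmoid_injective hab
    linarith
  have himg : (fun u => Real.sigmoid (2*u)) '' Set.univ = Set.Ioo 0 1 := by
    rw [Set.image_univ, ← Real.range_sigmoid]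
    ext y
    constructor
    · rintro ⟨u, rfl⟩; exact ⟨2*u, rfl⟩
    · rintro ⟨u, rfl⟩; exact ⟨u/2, by simp only; congr 1; ring⟩
  have key := MeasureTheory.integral_image_eq_integral_abs_deriv_smul MeasurableSet.univ hd hinj
    (fun x : ℝ => (x:ℂ) ^ ((β + μ)/2 - 1) * (1 - (x:ℂ)) ^ ((β - μ)/2 - 1))
  rw [himg] at key
  unfold betaIntegral
  rw [intervalIntegral.integral_of_le zero_le_one, MeasureTheory.integral_Ioc_eq_integral_Ioo, key,
    MeasureTheory.setIntegral_univ]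
  unfold JJ
  rw [← MeasureTheory.integral_const_mul]
  congr 1
  ext u
  have hc := Real.cosh_pos u
  have hs0 := Real.sigmoid_pos (2*u)
  have hs1 : 0 < 1 - Real.sigmoid (2*u) := sub_pos.2 (Real.sigmoid_lt_one _)
  have l0 : Real.log (Real.sigmoid (2*u)) = u - Real.log 2 - Real.log (Real.cosh u) := by
    rw [sig_eq, Real.log_div (Real.exp_ne_zero _) (by positivity), Real.log_exp,
      Real.log_mul (by norm_num) hc.ne']; ring
  have l1 : Real.log (1 - Real.sigmoid (2*u)) = -u - Real.log 2 - Real.log (Real.cosh u) := by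
    rw [one_sub_sig_eq, Real.log_div (Real.exp_ne_zero _) (by positivity), Real.log_exp,
      Real.log_mul (by norm_num) hc.ne']; ring
  rw [abs_of_pos (by positivity), Complex.real_smul]
  have e1 : (1 : ℂ) - (Real.sigmoid (2*u) : ℂ) = ((1 - Real.sigmoid (2*u) : ℝ) : ℂ) := by push_cast; rfl
  rw [e1, cpow_sub _ _ (ofReal_ne_zero.2 hs0.ne'), cpow_sub _ _ (ofReal_ne_zero.2 hs1.ne'),
    cpow_one, cpow_one]
  have c0 : (Real.sigmoid (2*u) : ℂ) ≠ 0 := ofReal_ne_zero.2 hs0.ne'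
  have c1 : ((1 - Real.sigmoid (2*u) : ℝ) : ℂ) ≠ 0 := ofReal_ne_zero.2 hs1.ne'
  have : ((Real.sigmoid (2*u) * (1 - Real.sigmoid (2*u)) * 2 : ℝ) : ℂ) *
      ((Real.sigmoid (2*u) : ℂ) ^ ((β + μ)/2) / (Real.sigmoid (2*u) : ℂ) *
      (((1 - Real.sigmoid (2*u) : ℝ) : ℂ) ^ ((β - μ)/2) / ((1 - Real.sigmoid (2*u) : ℝ) : ℂ)))
      = 2 * ((Real.sigmoid (2*u) : ℂ) ^ ((β + μ)/2) *
        ((1 - Real.sigmoid (2*u) : ℝ) : ℂ) ^ ((β - μ)/2)) := by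
    rw [ofReal_mul, ofReal_mul]
    generalize ((1 - Real.sigmoid (2*u) : ℝ) : ℂ) = y at *
    generalize (Real.sigmoid (2*u) : ℂ) = x at *
    field_simp
    push_cast; ring
  rw [this, cpow_def_of_ne_zero c0, cpow_def_of_ne_zero c1, ← ofReal_log hs0.le, ← ofReal_log hs1.le,
    l0, l1, ← Complex.exp_add]
  unfold kk
  rw [add_zero, cpow_def_of_ne_zero (ofReal_ne_zero.2 hc.ne'), ← ofReal_log hc.le,
    cpow_sub _ _ two_ne_zero, cpow_one, cpow_def_of_ne_zero two_ne_zero,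
    show Complex.log 2 = ((Real.log 2 : ℝ) : ℂ) by rw [ofReal_log (by norm_num)]; simp,
    div_eq_mul_inv, ← Complex.exp_neg, mul_assoc, ← Complex.exp_add,
    ← Complex.exp_add]
  congr 2
  push_cast
  ring

lemma JJ_gamma {β : ℝ} (μ : ℂ) (h : |μ.re| < β) :
    (2:ℂ) ^ (1 - (β:ℂ)) * (Gamma β * JJ β μ 0) = Gamma ((β + μ)/2) * Gamma ((β - μ)/2) := by
  have h' := abs_lt.1 h
  rw [Gamma_mul_Gamma_eq_betaIntegral, ← JJ_beta μ h]
  · rw [show ((β:ℂ) + μ)/2 + (β - μ)/2 = β by ring]; ring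
  · rw [div_ofNat_re, add_re, ofReal_re]; linarith
  · rw [div_ofNat_re, sub_re, ofReal_re]; linarith

lemma JJ_zero_ne {β : ℝ} (μ : ℂ) (h : |μ.re| < β) : JJ β μ 0 ≠ 0 := by
  intro h0
  have h' := abs_lt.1 h
  have := JJ_gamma μ h
  rw [h0, mul_zero, mul_zero] at this
  refine mul_ne_zero (Gamma_ne_zero_of_re_pos ?_) (Gamma_ne_zero_of_re_pos ?_) this.symm
  · rw [div_ofNat_re, add_re, ofReal_re]; linarith
  · rw [div_ofNat_re, sub_re, ofReal_re]; linarith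

lemma JJ_prod {a b : ℝ} (hab : a + b = 2) (μ : ℂ) (ha : |μ.re| < a) (hb : |μ.re| < b) (ha1 : a < 1) :
    JJ a μ 0 * JJ b μ 0 * (1 - a) * (Complex.cos (Real.pi * μ) - Real.cos (Real.pi * a))
      = 2 * Real.pi * Real.sin (Real.pi * a) := by
  have ha' := abs_lt.1 ha
  have hb' := abs_lt.1 hb
  have hbe : b = 2 - a := by linarith
  have g1 := JJ_gamma μ ha
  have g2 := JJ_gamma μ hb
  have r1 := Gamma_mul_Gamma_one_sub (((a:ℂ) + μ)/2)
  have r2 := Gamma_mul_Gamma_one_sub (((a:ℂ) - μ)/2)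
  have r3 := Gamma_mul_Gamma_one_sub (a:ℂ)
  have hpi : (Real.pi : ℂ) ≠ 0 := ofReal_ne_zero.2 Real.pi_ne_zero
  have a0 : 0 < a := (abs_nonneg _).trans_lt ha
  have n1 : Gamma (((a:ℂ) + μ)/2) ≠ 0 := Gamma_ne_zero_of_re_pos (by
    rw [div_ofNat_re, add_re, ofReal_re]; linarith)
  have n2 : Gamma (((a:ℂ) - μ)/2) ≠ 0 := Gamma_ne_zero_of_re_pos (by
    rw [div_ofNat_re, sub_re, ofReal_re]; linarith)
  have n3 : Gamma (1 - ((a:ℂ) + μ)/2) ≠ 0 := Gamma_ne_zero_of_re_pos (by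
    rw [sub_re, div_ofNat_re, add_re, ofReal_re, one_re]; linarith)
  have n4 : Gamma (1 - ((a:ℂ) - μ)/2) ≠ 0 := Gamma_ne_zero_of_re_pos (by
    rw [sub_re, div_ofNat_re, sub_re, ofReal_re, one_re]; linarith)
  have n5 : Gamma (a:ℂ) ≠ 0 := Gamma_ne_zero_of_re_pos (by simpa using a0)
  have n6 : Gamma (1 - (a:ℂ)) ≠ 0 := Gamma_ne_zero_of_re_pos (by simpa using ha1)
  have s1 : Complex.sin (Real.pi * ((a + μ)/2)) ≠ 0 := by
    intro h; rw [h, div_zero] at r1; exact mul_ne_zero n1 n3 r1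
  have s2 : Complex.sin (Real.pi * ((a - μ)/2)) ≠ 0 := by
    intro h; rw [h, div_zero] at r2; exact mul_ne_zero n2 n4 r2
  have s3 : Complex.sin (Real.pi * a) ≠ 0 := by
    intro h; rw [h, div_zero] at r3; exact mul_ne_zero n5 n6 r3
  have gb : Gamma (b:ℂ) = (1 - a) * Gamma (1 - (a:ℂ)) := by
    rw [← Gamma_add_one _ (by rw [sub_ne_zero]; exact_mod_cast ha1.ne'), hbe]; push_cast; ring_nf
  have eb1 : ((b:ℂ) + μ)/2 = 1 - ((a:ℂ) - μ)/2 := by rw [hbe]; push_cast; ring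
  have eb2 : ((b:ℂ) - μ)/2 = 1 - ((a:ℂ) + μ)/2 := by rw [hbe]; push_cast; ring
  rw [gb, eb1, eb2] at g2
  have p2 : (2:ℂ) ^ (1 - (a:ℂ)) * (2:ℂ) ^ (1 - (b:ℂ)) = 1 := by
    rw [← cpow_add _ _ two_ne_zero, hbe]; push_cast
    rw [show (1 - (a:ℂ)) + (1 - (2 - a)) = 0 by ring, cpow_zero]
  have tr : Complex.cos (Real.pi * μ) - Complex.cos (Real.pi * a) =
      2 * Complex.sin (Real.pi * ((a + μ)/2)) * Complex.sin (Real.pi * ((a - μ)/2)) := by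
    have e1 : (Real.pi : ℂ) * μ = Real.pi * ((a + μ)/2) - Real.pi * ((a - μ)/2) := by ring
    have e2 : (Real.pi : ℂ) * a = Real.pi * ((a + μ)/2) + Real.pi * ((a - μ)/2) := by ring
    rw [e1, e2, Complex.cos_sub, Complex.cos_add]; ring
  push_cast
  rw [tr]
  rw [eq_div_iff s1] at r1
  rw [eq_div_iff s2] at r2
  rw [eq_div_iff s3] at r3
  have G : JJ a μ 0 * JJ b μ 0 * (1 - a) * (Gamma (a:ℂ) * Gamma (1 - (a:ℂ))) =
      (Gamma (((a:ℂ) + μ)/2) * Gamma (1 - ((a:ℂ) + μ)/2)) *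
      (Gamma (((a:ℂ) - μ)/2) * Gamma (1 - ((a:ℂ) - μ)/2)) := by
    linear_combination (-(JJ a μ 0 * JJ b μ 0 * (1 - a) * (Gamma (a:ℂ) * Gamma (1 - (a:ℂ))))) * p2 +
      ((2:ℂ) ^ (1 - (b:ℂ)) * ((1 - a) * Gamma (1 - (a:ℂ)) * JJ b μ 0)) * g1 +
      Gamma (((a:ℂ) + μ)/2) * Gamma (((a:ℂ) - μ)/2) * g2
  set S1 := Complex.sin (Real.pi * ((a + μ)/2))
  set S2 := Complex.sin (Real.pi * ((a - μ)/2))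
  set S3 := Complex.sin (Real.pi * a)
  apply mul_left_cancel₀ hpi
  calc (Real.pi:ℂ) * (JJ a μ 0 * JJ b μ 0 * (1 - a) * (2 * S1 * S2))
      = (Gamma (a:ℂ) * Gamma (1 - (a:ℂ)) * S3) * (JJ a μ 0 * JJ b μ 0 * (1 - a) * (2 * S1 * S2)) := by
        rw [r3]
    _ = (JJ a μ 0 * JJ b μ 0 * (1 - a) * (Gamma (a:ℂ) * Gamma (1 - (a:ℂ)))) * (2 * S1 * S2 * S3) := by
        ring
    _ = (Gamma (((a:ℂ) + μ)/2) * Gamma (1 - ((a:ℂ) + μ)/2) * S1) *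
      (Gamma (((a:ℂ) - μ)/2) * Gamma (1 - ((a:ℂ) - μ)/2) * S2) * (2 * S3) := by rw [G]; ring
    _ = _ := by rw [r1, r2]; ring

lemma JJ_key {t : ℝ} (ht0 : 0 < t) (ht1 : t < 1) (μ : ℂ) (hμ : |μ.re| < 1/6)
    (hc : Complex.cos (Real.pi * μ) = ((Real.sqrt 3 / 2 / t : ℝ) : ℂ)) :
    5 * (1 - t) * (JJ (1/6) μ 0 * JJ (5/6+1) μ 0) = (1 + t) * (JJ (5/6) μ 0 * JJ (1/6+1) μ 0) := by
  have h1 := JJ_prod (a := 1/6) (b := 5/6+1) (by norm_num) μ hμ (by linarith) (by norm_num)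
  have h2 := JJ_prod (a := 5/6) (b := 1/6+1) (by norm_num) μ (by linarith) (by linarith) (by norm_num)
  have e1 : Real.pi * (1/6) = Real.pi / 6 := by ring
  have e2 : Real.pi * (5/6) = Real.pi - Real.pi / 6 := by ring
  rw [hc, e1, Real.cos_pi_div_six, Real.sin_pi_div_six] at h1
  rw [hc, e2, Real.cos_pi_sub, Real.sin_pi_sub, Real.cos_pi_div_six, Real.sin_pi_div_six] at h2
  have h3 : (Real.sqrt 3 : ℂ) ≠ 0 := ofReal_ne_zero.2 (by positivity)
  have ht : (t : ℂ) ≠ 0 := ofReal_ne_zero.2 ht0.ne'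
  generalize JJ (1/6) μ 0 * JJ (5/6+1) μ 0 = A at *
  generalize JJ (5/6) μ 0 * JJ (1/6+1) μ 0 = B at *
  push_cast at h1 h2
  apply mul_left_cancel₀ h3
  field_simp at h1 h2
  linear_combination h1 * 1 - h2 * 1

lemma exists_mu {t : ℝ} (ht0 : 0 < t) (ht1 : t < 1) : ∃ μ : ℂ, |μ.re| < 1/6 ∧
    (conj μ = μ ∨ conj μ = -μ) ∧
    Complex.cos (Real.pi * μ) = ((Real.sqrt 3 / 2 / t : ℝ) : ℂ) := by
  set c := Real.sqrt 3 / 2 / t with hcdef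
  have hk : 0 < Real.sqrt 3 / 2 := by positivity
  have hc0 : Real.sqrt 3 / 2 < c := by
    rw [hcdef, lt_div_iff₀ ht0]; nlinarith
  rcases le_or_gt c 1 with h | h
  · refine ⟨((Real.arccos c / Real.pi : ℝ) : ℂ), ?_, Or.inl (conj_ofReal _), ?_⟩
    · rw [ofReal_re, abs_of_nonneg (div_nonneg (Real.arccos_nonneg _) Real.pi_pos.le),
        div_lt_iff₀ Real.pi_pos]
      have := Real.arccos_lt_arccos (x := Real.cos (Real.pi/6)) (y := c)
        (by rw [Real.cos_pi_div_six]; linarith) (by rw [Real.cos_pi_div_six]; exact hc0) h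
      rw [Real.arccos_cos (by positivity) (by linarith [Real.pi_pos])] at this
      linarith
    · rw [← ofReal_mul, mul_div_cancel₀ _ Real.pi_ne_zero, ← ofReal_cos,
        Real.cos_arccos (by linarith) h]
  · refine ⟨((Real.arcosh c / Real.pi : ℝ) : ℂ) * I, ?_, Or.inr ?_, ?_⟩
    · simp
    · simp
    · rw [← mul_assoc, ← ofReal_mul, mul_div_cancel₀ _ Real.pi_ne_zero, Complex.cos_mul_I,
        ← ofReal_cosh, Real.cosh_arcosh h.le]

lemma JJ_neg_mu (β : ℝ) (μ v : ℂ) : JJ β (-μ) v = JJ β μ v := by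
  unfold JJ
  rw [← MeasureTheory.integral_neg_eq_self]
  congr 1
  ext u
  unfold kk
  simp

lemma JJ_conj (β : ℝ) {μ v : ℂ} (hμ : conj μ = μ ∨ conj μ = -μ) (hv : -(1/2) ≤ v.re) :
    conj (JJ β μ v) = JJ β μ (conj v) := by
  have h1 : conj (JJ β μ v) = JJ β (conj μ) (conj v) := by
    unfold JJ
    rw [← integral_conj]
    congr 1
    ext u
    unfold kk
    rw [map_mul, ← Complex.exp_conj, map_mul, conj_ofReal]
    congr 1
    have := cpow_conj ((Real.cosh u : ℂ) + v) (-(β:ℂ)) (mem_slitPlane_iff_arg.1 (X_slit hv u)).1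
    rw [map_add, conj_ofReal, map_neg, conj_ofReal] at this
    rw [this, conj_conj]
  rw [h1]
  rcases hμ with h | h
  · rw [h]
  · rw [h, JJ_neg_mu]

lemma JJ_one_ne {β : ℝ} (μ : ℂ) (h : |μ.re| < β) : JJ β μ 1 ≠ 0 := by
  have hβ : 0 < β := (abs_nonneg _).trans_lt h
  have e : JJ β μ 1 = (2:ℂ) ^ (-(β:ℂ)) * (2 * JJ (2*β) (2*μ) 0) := by
    have hk : ∀ u : ℝ, kk β μ 1 u = (2:ℂ) ^ (-(β:ℂ)) * kk (2*β) (2*μ) 0 (u/2) := by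
      intro u
      unfold kk
      have hc := Real.cosh_pos (u/2)
      have e1 : (Real.cosh u : ℂ) + 1 = ((2 * Real.cosh (u/2)^2 : ℝ) : ℂ) := by
        have : Real.cosh u = 2 * Real.cosh (u/2)^2 - 1 := by
          conv_lhs => rw [show u = 2 * (u/2) by ring, Real.cosh_two_mul]
          have := Real.cosh_sq (u/2); linarith
        rw [this]; push_cast; ring
      rw [e1, add_zero, ofReal_mul, mul_cpow_ofReal_nonneg (by norm_num) (by positivity), ofReal_pow,
        mul_left_comm, ofReal_ofNat]
      congr 1
      rw [show 2 * μ * ((u/2 : ℝ) : ℂ) = μ * u by push_cast; ring]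
      congr 1
      rw [cpow_def_of_ne_zero (pow_ne_zero _ (ofReal_ne_zero.2 hc.ne')),
        cpow_def_of_ne_zero (ofReal_ne_zero.2 hc.ne'), ← ofReal_pow, ← ofReal_log (by positivity),
        ← ofReal_log hc.le, Real.log_pow]
      congr 1
      push_cast; ring
    unfold JJ
    simp_rw [hk]
    rw [MeasureTheory.integral_const_mul,
      MeasureTheory.Measure.integral_comp_div (fun u => kk (2*β) (2*μ) 0 u) 2]
    simp
  rw [e]
  refine mul_ne_zero (by simp [cpow_eq_zero_iff]) (mul_ne_zero two_ne_zero (JJ_zero_ne _ ?_))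
  simp only [mul_re, re_ofNat, im_ofNat, zero_mul, sub_zero, abs_mul]
  rw [abs_of_pos (by norm_num : (0:ℝ) < 2)]; linarith

noncomputable def rr (x : ℝ) : ℝ := (1 + x^2) ^ (1/3 : ℝ)

lemma rr_pos (x : ℝ) : 0 < rr x := by unfold rr; positivity

lemma rr_one_le (x : ℝ) : 1 ≤ rr x := by
  unfold rr
  exact Real.one_le_rpow (by nlinarith [sq_nonneg x]) (by norm_num)

lemma rr_cube (x : ℝ) : rr x ^ 3 = 1 + x^2 := by
  unfold rr
  rw [← Real.rpow_natCast, ← Real.rpow_mul (by positivity)]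
  norm_num

lemma rr_neg (x : ℝ) : rr (-x) = rr x := by unfold rr; rw [neg_sq]

lemma rr_deriv (x : ℝ) : HasDerivAt rr ((2 * x / 3) / rr x ^ 2) x := by
  have h1 : HasDerivAt (fun x : ℝ => 1 + x^2) (2 * x) x := by
    simpa using (hasDerivAt_pow 2 x).const_add 1
  have h := h1.rpow_const (p := 1/3) (Or.inl (by positivity))
  have e : (1 + x^2) ^ ((1/3 : ℝ) - 1) = (rr x ^ 2)⁻¹ := by
    unfold rr
    rw [← Real.rpow_natCast ((1 + x^2) ^ (1/3 : ℝ)) 2, ← Real.rpow_mul (by positivity),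
      ← Real.rpow_neg (by positivity)]
    norm_num
  rw [e] at h
  refine h.congr_deriv ?_
  rw [div_eq_mul_inv]; ring

def Sol (P : ℂ) (f g : ℝ → ℂ) : Prop :=
  ∀ x : ℝ, HasDerivAt f (g x / (rr x : ℂ)^2) x ∧ HasDerivAt g (-P * f x / (rr x : ℂ)) x

lemma Sol.lin {P : ℂ} {f g f' g' : ℝ → ℂ} (h : Sol P f g) (h' : Sol P f' g') (a b : ℂ) :
    Sol P (fun x => a * f x + b * f' x) (fun x => a * g x + b * g' x) := by
  intro x
  refine ⟨(((h x).1.const_mul a).add ((h' x).1.const_mul b)).congr_deriv ?_,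
    (((h x).2.const_mul a).add ((h' x).2.const_mul b)).congr_deriv ?_⟩ <;> ring

lemma Sol.zero {P : ℂ} {f g : ℝ → ℂ} (h : Sol P f g) (f0 : f 0 = 0) (g0 : g 0 = 0) (x : ℝ) :
    f x = 0 := by
  have key := ODE_solution_unique_univ (E := ℂ × ℂ)
    (v := fun x p => (p.2 / (rr x : ℂ)^2, -P * p.1 / (rr x : ℂ))) (s := fun _ => Set.univ)
    (K := max 1 ‖P‖₊) (f := fun x => (f x, g x)) (g := fun _ => 0) (t₀ := 0)
    (fun x => by
      apply LipschitzWith.lipschitzOnWith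
      apply LipschitzWith.of_dist_le_mul
      intro p q
      have h1 := rr_one_le x
      have h2 : (1:ℝ) ≤ rr x ^ 2 := one_le_pow₀ h1
      rw [Prod.dist_eq, Prod.dist_eq]
      simp only [dist_eq_norm]
      rw [← sub_div, ← sub_div, ← mul_sub, norm_div, norm_div, norm_mul, norm_neg, norm_pow,
        Complex.norm_real, Real.norm_of_nonneg (rr_pos x).le]
      set a := ‖p.1 - q.1‖
      set b := ‖p.2 - q.2‖
      have hK1 : (1:ℝ) ≤ ((max 1 ‖P‖₊ : NNReal) : ℝ) := by exact_mod_cast le_max_left _ _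
      have hK2 : ‖P‖ ≤ ((max 1 ‖P‖₊ : NNReal) : ℝ) := by exact_mod_cast le_max_right 1 ‖P‖₊
      have ha : 0 ≤ a := norm_nonneg _
      have hb : 0 ≤ b := norm_nonneg _
      have hm1 : a ≤ max a b := le_max_left _ _
      have hm2 : b ≤ max a b := le_max_right _ _
      refine max_le ?_ ?_
      · refine (div_le_self hb h2).trans ?_
        nlinarith
      · refine (div_le_self (by positivity) h1).trans ?_
        exact mul_le_mul hK2 hm1 ha (by positivity))
    (fun x => ⟨(h x).1.prodMk (h x).2, trivial⟩)
    (fun x => ⟨(hasDerivAt_const x (0 : ℂ × ℂ)).congr_deriv (by simp; rfl), trivial⟩)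
    (by simp [f0, g0])
  have := congrFun key x
  exact congrArg Prod.fst this

lemma JJ_derivI {β : ℝ} (μ : ℂ) (h : |μ.re| < β) (x : ℝ) :
    HasDerivAt (fun x : ℝ => JJ β μ (x * I)) (-(β:ℂ) * I * JJ (β+1) μ (x * I)) x := by
  have h0 : HasDerivAt (fun x : ℝ => (x : ℂ) * I) I x := by
    simpa using (Complex.ofRealCLM.hasDerivAt (x := x)).mul_const I
  have h1 := (JJ_deriv μ h (v := x * I) (by simp)).comp x h0
  refine h1.congr_deriv ?_
  ring

lemma rr_derivC (x : ℝ) : HasDerivAt (fun x => (rr x : ℂ)) ((2 * x / 3) / (rr x : ℂ) ^ 2) x := by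
  have := (rr_deriv x).ofReal_comp
  refine this.congr_deriv ?_
  push_cast; rfl

lemma sol_one {μ : ℂ} (h : |μ.re| < 1/6) : Sol (1/36 - μ^2) (fun x => JJ (1/6) μ (x * I))
    (fun x => -(I/6) * (rr x : ℂ)^2 * JJ (1/6+1) μ (x * I)) := by
  intro x
  have hr : (rr x : ℂ) ≠ 0 := ofReal_ne_zero.2 (rr_pos x).ne'
  have hr3 : (rr x : ℂ)^3 = 1 + x^2 := by exact_mod_cast congrArg ofReal (rr_cube x)
  refine ⟨(JJ_derivI μ h x).congr_deriv ?_, ?_⟩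
  · push_cast
    field_simp
  · have h1 := ((((rr_derivC x).pow 2).const_mul (-(I/6)))).mul
      (JJ_derivI (β := 1/6+1) μ (by linarith) x)
    refine h1.congr_deriv ?_
    have rel := JJ_rel μ h (v := x * I) (by simp)
    push_cast at rel ⊢
    simp only [Pi.pow_apply]
    generalize JJ (1/6) μ (x * I) = A at *
    generalize JJ (1/6+1) μ (x * I) = B at *
    generalize JJ (1/6+1+1) μ (x * I) = C at *
    generalize (rr x : ℂ) = r at *
    rw [eq_div_iff hr]
    have e : r * ((2 * (x:ℂ) / 3) / r^2) * r = 2 * x / 3 := by field_simp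
    linear_combination -(I/6) * 2 * B * e + (7/36) * I^2 * C * hr3 + rel + (7/36) * C * I_sq

lemma sol_three {μ : ℂ} (h : |μ.re| < 1/6) : Sol (1/36 - μ^2)
    (fun x => (rr x : ℂ) * JJ (5/6) μ (x * I))
    (fun x => (2/3) * (x:ℂ) * JJ (5/6) μ (x * I) - (5/6) * I * (1 + (x:ℂ)^2) * JJ (5/6+1) μ (x * I)) := by
  intro x
  have hr : (rr x : ℂ) ≠ 0 := ofReal_ne_zero.2 (rr_pos x).ne'
  have hr3 : (rr x : ℂ)^3 = 1 + x^2 := by exact_mod_cast congrArg ofReal (rr_cube x)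
  have hx : HasDerivAt (fun x : ℝ => (x : ℂ)) 1 x := Complex.ofRealCLM.hasDerivAt
  have d5 := JJ_derivI (β := 5/6) μ (by linarith) x
  have d11 := JJ_derivI (β := 5/6+1) μ (by linarith) x
  constructor
  · refine ((rr_derivC x).mul d5).congr_deriv ?_
    push_cast
    rw [← hr3]
    field_simp
    ring
  · refine (((hx.const_mul (2/3)).mul d5).sub
      ((((hx.pow 2).const_add 1).const_mul ((5/6)*I)).mul d11)).congr_deriv ?_
    have rel := JJ_rel (β := 5/6) μ (by linarith) (v := x * I) (by simp)
    push_cast at rel ⊢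
    simp only [Pi.pow_apply]
    generalize JJ (5/6) μ (x * I) = A at *
    generalize JJ (5/6+1) μ (x * I) = B at *
    generalize JJ (5/6+1+1) μ (x * I) = C at *
    rw [eq_div_iff hr]
    linear_combination (rr x : ℂ) * rel + (rr x : ℂ) * (55/36) * C * I_sq

lemma sol_two {P : ℂ} {f g : ℝ → ℂ} (h : Sol P f g) :
    Sol P (fun x => f (-x)) (fun x => -g (-x)) := by
  intro x
  have h1 := h (-x)
  rw [rr_neg] at h1
  refine ⟨(h1.1.scomp x (hasDerivAt_neg x)).congr_deriv ?_,
    (h1.2.scomp x (hasDerivAt_neg x)).neg.congr_deriv ?_⟩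
  · simp [neg_div]
  · simp

lemma rel_main {t : ℝ} (ht0 : 0 < t) (ht1 : t < 1) {μ : ℂ} (hμ : |μ.re| < 1/6)
    (hc : Complex.cos (Real.pi * μ) = ((Real.sqrt 3 / 2 / t : ℝ) : ℂ)) :
    ∃ c : ℂ, ∀ x : ℝ, c * (rr x * JJ (5/6) μ (x * I)) =
      JJ (1/6) μ (x * I) - t * JJ (1/6) μ (-(x * I)) := by
  have n5 := JJ_zero_ne (β := 5/6) μ (by linarith)
  have key := JJ_key ht0 ht1 μ hμ hc
  refine ⟨(1 - t) * JJ (1/6) μ 0 / JJ (5/6) μ 0, fun x => ?_⟩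
  have s1 := sol_one hμ
  have s := ((sol_three hμ).lin (s1.lin (sol_two s1) (-1) t) ((1 - t) * JJ (1/6) μ 0 / JJ (5/6) μ 0) 1)
  have r0 : rr 0 = 1 := by simp [rr]
  have := s.zero (by
    simp [r0]; field_simp; ring) (by
    simp only [r0, neg_zero, ofReal_zero, zero_mul, mul_zero, ofReal_one]
    generalize JJ (1/6) μ 0 = A at *
    generalize JJ (1/6+1) μ 0 = B at *
    generalize JJ (5/6) μ 0 = C at *
    generalize JJ (5/6+1) μ 0 = D at *
    field_simp
    linear_combination -I * key) x
  simp only [ofReal_neg, neg_mul] at this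
  linear_combination this

lemma disc_exists {t : ℝ} (ht0 : 0 < t) (ht1 : t < 1) : ∃ (Z W : ℂ → ℂ) (M : ℝ),
    (∀ v : ℂ, -(1/2) < v.re → DifferentiableAt ℂ Z v ∧ DifferentiableAt ℂ W v) ∧
    (∀ v : ℂ, 0 ≤ v.re → ‖Z v‖ ≤ M ∧ ‖W v‖ ≤ M) ∧
    (∀ x : ℝ, W (x * I) = (Z (x * I) + t * conj (Z (x * I)))^3) ∧ W 1 = 0 ∧ Z 1 ≠ 0 := by
  obtain ⟨μ, hμ, hconj, hcos⟩ := exists_mu ht0 ht1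
  obtain ⟨c, hc⟩ := rel_main ht0 ht1 hμ hcos
  obtain ⟨M1, hM1⟩ := JJ_bound (β := 1/6) μ hμ
  obtain ⟨M2, hM2⟩ := JJ_bound (β := 5/6) μ (by linarith)
  refine ⟨fun v => I * JJ (1/6) μ v, fun v => (I * c)^3 * ((1 - v^2) * JJ (5/6) μ v ^ 3),
    max M1 (‖(I * c)^3‖ * (M2^3 + M1^3)), ?_, ?_, ?_, by simp, ?_⟩
  · intro v hv
    have d1 := (JJ_deriv (β := 1/6) μ hμ hv).differentiableAt
    have d5 := (JJ_deriv (β := 5/6) μ (by linarith) hv).differentiableAt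
    exact ⟨by fun_prop, by fun_prop⟩
  · intro v hv
    constructor
    · refine le_trans ?_ (le_max_left _ _)
      simpa using (hM1 v hv).1
    · refine le_trans ?_ (le_max_right _ _)
      simp only
      rw [norm_mul]
      refine mul_le_mul_of_nonneg_left ?_ (norm_nonneg _)
      have b1 := (hM2 v hv).1
      have b2 := (hM1 v hv).2 (2/3) (by norm_num)
      rw [show (1/6 + 2/3 : ℝ) = 5/6 by norm_num] at b2
      have b3 : ‖(1 - v^2 : ℂ)‖ ≤ 1 + ‖v‖^2 := by
        refine (norm_sub_le _ _).trans ?_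
        simp
      have b4 : (‖v‖ ^ (2/3 : ℝ))^3 = ‖v‖^2 := by
        rw [← Real.rpow_natCast, ← Real.rpow_mul (norm_nonneg _)]
        norm_num
      rw [norm_mul, norm_pow]
      have b5 := pow_le_pow_left₀ (norm_nonneg _) b1 3
      have b6 := pow_le_pow_left₀ (by positivity) b2 3
      rw [mul_pow, b4] at b6
      calc _ ≤ (1 + ‖v‖^2) * ‖JJ (5/6) μ v‖^3 := by gcongr
        _ ≤ _ := by linarith
  · intro x
    have h1 := hc x
    have h2 := JJ_conj (1/6) (v := x * I) hconj (by simp)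
    rw [map_mul, conj_ofReal, conj_I, mul_neg] at h2
    have hr3 : (rr x : ℂ)^3 = 1 + x^2 := by exact_mod_cast congrArg ofReal (rr_cube x)
    simp only
    rw [map_mul, conj_I, h2]
    have e : I * JJ (1/6) μ (x * I) + t * (-I * JJ (1/6) μ (-(x * I))) =
        I * (c * (rr x * JJ (5/6) μ (x * I))) := by rw [h1]; ring
    rw [e]
    have : (1 - ((x:ℂ) * I)^2) = (rr x : ℂ)^3 := by rw [hr3, mul_pow, I_sq]; ring
    rw [this]; ring
  · exact mul_ne_zero I_ne_zero (JJ_one_ne μ hμ)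

lemma Sset_mem {t : ℝ} (ht0 : 0 < t) (z w : ℂ) :
    (z, w) ∈ Sset t ↔ w = ((z + t * conj z)^3 - z^3) / (3 * t) := by
  have ht : (t : ℂ) ≠ 0 := ofReal_ne_zero.2 ht0.ne'
  have e : z ^ 2 * conj z + (t : ℂ) * z * (conj z) ^ 2 + ((t : ℂ) ^ 2 / 3) * (conj z) ^ 3
      = ((z + t * conj z)^3 - z^3) / (3 * t) := by
    field_simp; ring
  constructor
  · rintro ⟨z', h⟩
    rw [Prod.mk.injEq] at h
    obtain ⟨rfl, h⟩ := h
    rw [h, e]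
  · intro h
    exact ⟨z, by rw [h, e]⟩

lemma eval_cont (p : MvPolynomial (Fin 2) ℂ) : Continuous (fun w : ℂ × ℂ =>
    MvPolynomial.eval (fun i => if i = 0 then w.1 else w.2) p) := by
  have h := MvPolynomial.continuous_eval p
  refine h.comp (continuous_pi fun i => ?_)
  by_cases hi : i = 0
  · simp only [hi, if_true]; exact continuous_fst
  · simp only [hi, if_false]; exact continuous_snd

lemma eval_diff (p : MvPolynomial (Fin 2) ℂ) {A B : ℂ → ℂ} {v : ℂ} (hA : DifferentiableAt ℂ A v)
    (hB : DifferentiableAt ℂ B v) : DifferentiableAt ℂ (fun v =>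
    MvPolynomial.eval (fun i => if i = 0 then A v else B v) p) v := by
  induction p using MvPolynomial.induction_on with
  | C a => simp
  | add p q hp hq => simp only [map_add]; exact hp.add hq
  | mul_X p i hp =>
    simp only [map_mul, MvPolynomial.eval_X]
    refine hp.mul ?_
    by_cases hi : i = 0
    · simpa only [hi, if_true] using hA
    · simpa only [hi, if_false] using hB

lemma main_aux {t : ℝ} (ht0 : 0 < t) (ht1 : t < 1) {r : ℝ} (hr : 0 < r) :
    ¬ PolyConvex2 (Sset t ∩ eClosedBall r) := by
  obtain ⟨Z, W, M, hd, hb, hbd, hW1, hZ1⟩ := disc_exists ht0 ht1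
  have htC : (t : ℂ) ≠ 0 := ofReal_ne_zero.2 ht0.ne'
  have hM : 0 ≤ M := (norm_nonneg _).trans (hb 0 (by simp)).1
  set N : ℝ := (M + M^3) / (3 * t) with hN
  have hN0 : 0 ≤ N := by positivity
  set δ : ℝ := min 1 (r / (M + N + 1)) with hδ
  have hδ0 : 0 < δ := lt_min one_pos (by positivity)
  have hδ1 : δ ≤ 1 := min_le_left _ _
  have hδr : δ * (M + N + 1) ≤ r := by
    rw [← le_div_iff₀ (by positivity)]; exact min_le_right _ _
  have hδC : (δ : ℂ) ≠ 0 := ofReal_ne_zero.2 hδ0.ne'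
  set A : ℂ → ℂ := fun v => δ * Z v with hA
  set B : ℂ → ℂ := fun v => δ^3 * ((W v - Z v ^ 3) / (3 * t)) with hB
  have dA : ∀ v : ℂ, -(1/2) < v.re → DifferentiableAt ℂ A v := fun v hv => (hd v hv).1.const_mul _
  have dB : ∀ v : ℂ, -(1/2) < v.re → DifferentiableAt ℂ B v := fun v hv =>
    (((hd v hv).2.sub ((hd v hv).1.pow 3)).div_const _).const_mul _
  have hball : ∀ v : ℂ, 0 ≤ v.re → (A v, B v) ∈ eClosedBall r := by
    intro v hv
    obtain ⟨b1, b2⟩ := hb v hv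
    have nA : ‖A v‖ ≤ δ * M := by
      simp only [hA, norm_mul, Complex.norm_real, Real.norm_of_nonneg hδ0.le]
      gcongr
    have nB : ‖B v‖ ≤ δ * N := by
      simp only [hB, norm_mul, norm_div, norm_pow, Complex.norm_real, Real.norm_of_nonneg hδ0.le,
        Real.norm_of_nonneg ht0.le, Complex.norm_ofNat]
      have h1 : ‖W v - Z v ^ 3‖ ≤ M + M^3 := by
        refine (norm_sub_le _ _).trans ?_
        rw [norm_pow]; gcongr
      have h2 : δ^3 ≤ δ := by
        calc δ^3 ≤ δ^1 := pow_le_pow_of_le_one hδ0.le hδ1 (by norm_num)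
          _ = δ := pow_one _
      rw [hN]
      gcongr
    change ‖A v‖^2 + ‖B v‖^2 ≤ r^2
    have h1 := pow_le_pow_left₀ (norm_nonneg _) nA 2
    have h2 := pow_le_pow_left₀ (norm_nonneg _) nB 2
    have h3 := pow_le_pow_left₀ (by positivity) hδr 2
    have h4 : (δ*M)^2 + (δ*N)^2 ≤ (δ * (M + N + 1))^2 := by
      have : 0 ≤ δ^2 * (2*M*N + 2*M + 2*N + 1) := by positivity
      nlinarith
    linarith
  have hS : ∀ x : ℝ, (A (x * I), B (x * I)) ∈ Sset t := by
    intro x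
    rw [Sset_mem ht0]
    simp only [hA, hB]
    rw [hbd, map_mul, conj_ofReal]
    ring
  have hcomp : Bornology.IsBounded (eClosedBall r) := by
    refine (Metric.isBounded_closedBall (x := (0 : ℂ × ℂ)) (r := r)).subset ?_
    intro z hz
    change ‖z.1‖^2 + ‖z.2‖^2 ≤ r^2 at hz
    rw [mem_closedBall_zero_iff, Prod.norm_def]
    refine max_le ?_ ?_
    · nlinarith [sq_nonneg ‖z.2‖, norm_nonneg z.1]
    · nlinarith [sq_nonneg ‖z.1‖, norm_nonneg z.2]
  intro hPC
  have hmem : (A 1, B 1) ∈ polyHull2 (Sset t ∩ eClosedBall r) := by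
    intro p
    set K := Sset t ∩ eClosedBall r
    have bdd : ∀ s ⊆ eClosedBall r, BddAbove ((fun w : ℂ × ℂ =>
          ‖MvPolynomial.eval (fun i => if i = 0 then w.1 else w.2) p‖) '' s) := by
      intro s hs
      have hc : IsCompact (closure (eClosedBall r)) := hcomp.isCompact_closure
      have := (hc.image (eval_cont p).norm).bddAbove
      exact this.mono (Set.image_mono (hs.trans subset_closure))
    obtain ⟨Q, hQ⟩ := bdd _ subset_rfl
    have hQ' : ∀ v : ℂ, 0 ≤ v.re →
        ‖MvPolynomial.eval (fun i => if i = 0 then A v else B v) p‖ ≤ Q := fun v hv =>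
      hQ ⟨(A v, B v), hball v hv, rfl⟩
    refine PhragmenLindelof.right_half_plane_of_bounded_on_real
      (f := fun v => MvPolynomial.eval (fun i => if i = 0 then A v else B v) p) ?_ ?_ ?_ ?_
      (z := 1) (by simp)
    · apply DifferentiableOn.diffContOnCl
      intro v hv
      rw [Complex.closure_setOfPred_lt_re] at hv
      have hv' : -(1/2) < v.re := by have : 0 ≤ v.re := hv; linarith
      exact (eval_diff p (dA v hv') (dB v hv')).differentiableWithinAt
    · refine ⟨1, by norm_num, 0, ?_⟩
      refine Asymptotics.IsBigO.of_bound Q ?_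
      refine Filter.Eventually.filter_mono inf_le_right ?_
      rw [Filter.eventually_principal]
      intro v hv
      simpa using hQ' v (le_of_lt hv)
    · refine ⟨Q, ?_⟩
      rw [Filter.eventually_map]
      filter_upwards [Filter.eventually_ge_atTop 0] with x hx
      exact hQ' x (by simpa using hx)
    · intro x
      exact le_csSup (bdd _ Set.inter_subset_right)
        ⟨(A (x * I), B (x * I)), ⟨hS x, hball _ (by simp)⟩, rfl⟩
  rw [hPC] at hmem
  have h1 := (Sset_mem ht0 _ _).1 hmem.1
  simp only [hA, hB] at h1
  rw [hW1, map_mul, conj_ofReal] at h1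
  have h2 : Z 1 + t * conj (Z 1) = 0 := by
    have : ((δ:ℂ) * (Z 1 + t * conj (Z 1)))^3 = 0 := by
      field_simp at h1
      linear_combination -δ^3 * h1
    have := pow_eq_zero_iff (three_ne_zero) |>.1 this
    exact (mul_eq_zero.1 this).resolve_left hδC
  have h3 : ‖Z 1‖ = t * ‖Z 1‖ := by
    have : Z 1 = -(t * conj (Z 1)) := by linear_combination h2
    conv_lhs => rw [this]
    rw [norm_neg, norm_mul, Complex.norm_real, Real.norm_of_nonneg ht0.le, Complex.norm_conj]
  have h4 : 0 < ‖Z 1‖ := norm_pos_iff.2 hZ1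
  nlinarith

/-- for `0 < t < 1` and every `r > 0`, `S_t ∩ B̄(0;r)` is not polynomially
convex; in particular `S_t` is not locally polynomially convex at the origin. -/
theorem stmt_7 (t : ℝ) (ht0 : 0 < t) (ht1 : t < 1) :
    (∀ r > (0 : ℝ), ¬ PolyConvex2 (Sset t ∩ eClosedBall r)) ∧
      ¬ (∃ r > (0 : ℝ), PolyConvex2 (Sset t ∩ eClosedBall r)) := by
  refine ⟨fun r hr => main_aux ht0 ht1 hr, ?_⟩
  rintro ⟨r, hr, h⟩
  exact main_aux ht0 ht1 hr h
end

section
/- For every t with 0 < t < √3/2 and every δ > 0, the polynomially convex hull of S_t ∩ B̄(0;δ) contains a nonempty open ball centred at the origin: there exists ρ > 0 such that B(0;ρ) is contained in the hull of S_t ∩ B̄(0;δ). -/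
open Complex ComplexConjugate

/-- evaluation of a polynomial at a point of `ℂ²` -/
noncomputable def ev (p : MvPolynomial (Fin 2) ℂ) (z : ℂ × ℂ) : ℂ :=
  MvPolynomial.eval (fun i => if i = 0 then z.1 else z.2) p

/-- hull described by bounds -/
def HH (K : Set (ℂ × ℂ)) : Set (ℂ × ℂ) :=
  { z | ∀ (p : MvPolynomial (Fin 2) ℂ) (C : ℝ), (∀ w ∈ K, ‖ev p w‖ ≤ C) → ‖ev p z‖ ≤ C }

theorem ev_cont (p : MvPolynomial (Fin 2) ℂ) : Continuous (ev p) := by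
  unfold ev
  have : Continuous fun z : ℂ × ℂ => (fun i : Fin 2 => if i = 0 then z.1 else z.2) := by
    refine continuous_pi fun i => ?_
    by_cases h : i = 0
    · simpa [h] using continuous_fst
    · simpa [h] using continuous_snd
  exact (MvPolynomial.continuous_eval p).comp this

theorem HH_sub (K : Set (ℂ × ℂ)) (hK : Bornology.IsBounded K) : HH K ⊆ polyHull2 K := by
  intro z hz p
  have hc : IsCompact (closure K) := hK.isCompact_closure
  have hb : BddAbove ((fun w => ‖ev p w‖) '' K) :=
    ((hc.image (ev_cont p).norm).bddAbove).mono (Set.image_mono subset_closure)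
  exact hz p _ fun w hw => le_csSup hb ⟨w, hw, rfl⟩

theorem HH_self (K : Set (ℂ × ℂ)) : K ⊆ HH K := fun z hz _ _ h => h z hz

theorem ev_comp (p : MvPolynomial (Fin 2) ℂ) {f g : ℂ → ℂ} {U : Set ℂ}
    (hf : DiffContOnCl ℂ f U) (hg : DiffContOnCl ℂ g U) :
    DiffContOnCl ℂ (fun q => ev p (f q, g q)) U := by
  induction p using MvPolynomial.induction_on with
  | C a => simpa [ev] using diffContOnCl_const
  | add p q hp hq =>
    have := hp.add hq
    simp only [ev, map_add] at this ⊢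
    exact this
  | mul_X p i hp =>
    have hi : DiffContOnCl ℂ (fun q => if i = 0 then f q else g q) U := by
      by_cases h : i = 0 <;> simp [h, hf, hg]
    simpa [ev] using hp.smul hi

theorem HH_disc (K : Set (ℂ × ℂ)) {f g : ℂ → ℂ} {U : Set ℂ} (hU : Bornology.IsBounded U)
    (hf : DiffContOnCl ℂ f U) (hg : DiffContOnCl ℂ g U)
    (hfr : ∀ q ∈ frontier U, (f q, g q) ∈ HH K) {q : ℂ} (hq : q ∈ closure U) :
    (f q, g q) ∈ HH K := by
  intro p C hC
  exact Complex.norm_le_of_forall_mem_frontier_norm_le hU (ev_comp p hf hg) (fun q hq => hfr q hq p C hC) hq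

theorem ev_theta (p : MvPolynomial (Fin 2) ℂ) {A B D : ℂ → ℂ} {U : Set ℂ}
    (hA : DiffContOnCl ℂ A U) (hB : DiffContOnCl ℂ B U) (hD : DiffContOnCl ℂ D U) :
    ∃ F G : ℂ → ℂ, DiffContOnCl ℂ F U ∧ DiffContOnCl ℂ G U ∧
      ∀ q θ, θ ^ 2 = D q → ev p (θ * A q, θ * B q) = F q + θ * G q := by
  induction p using MvPolynomial.induction_on with
  | C a => exact ⟨fun _ => a, fun _ => 0, diffContOnCl_const, diffContOnCl_const, by simp [ev]⟩
  | add p q hp hq =>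
    obtain ⟨F, G, hF, hG, h⟩ := hp
    obtain ⟨F', G', hF', hG', h'⟩ := hq
    refine ⟨_, _, hF.add hF', hG.add hG', fun q θ hθ => ?_⟩
    have := h q θ hθ
    have := h' q θ hθ
    simp only [ev, map_add, Pi.add_apply] at *
    linear_combination h q θ hθ + h' q θ hθ
  | mul_X p i hp =>
    obtain ⟨F, G, hF, hG, h⟩ := hp
    obtain ⟨E, hE, hEi⟩ : ∃ E : ℂ → ℂ, DiffContOnCl ℂ E U ∧
        ∀ q θ, (if i = 0 then θ * A q else θ * B q) = θ * E q := by
      by_cases hi : i = 0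
      · exact ⟨A, hA, by simp [hi]⟩
      · exact ⟨B, hB, by simp [hi]⟩
    refine ⟨_, _, (hD.smul hG).smul hE, hF.smul hE, fun q θ hθ => ?_⟩
    have h1 := h q θ hθ
    simp only [ev, map_mul, MvPolynomial.eval_X, smul_eq_mul] at *
    rw [hEi q θ, h1, ← hθ]
    ring

theorem HH_theta (K : Set (ℂ × ℂ)) (hK : K.Nonempty) {A B D : ℂ → ℂ} {U : Set ℂ} (hU : Bornology.IsBounded U)
    (hA : DiffContOnCl ℂ A U) (hB : DiffContOnCl ℂ B U) (hD : DiffContOnCl ℂ D U)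
    (hfr : ∀ q ∈ frontier U, ∀ θ, θ ^ 2 = D q → (θ * A q, θ * B q) ∈ K)
    {q : ℂ} (hq : q ∈ closure U) {θ : ℂ} (hθ : θ ^ 2 = D q) :
    (θ * A q, θ * B q) ∈ HH K := by
  have key : ∀ (p : MvPolynomial (Fin 2) ℂ) (C : ℝ), (∀ w ∈ K, ‖ev p w‖ ≤ C) →
      ‖ev p (θ * A q, θ * B q)‖ ≤ 2 * C := by
    intro p C hC
    have hC0 : 0 ≤ C := by
      obtain ⟨w, hw⟩ := hK
      exact (norm_nonneg _).trans (hC w hw)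
    obtain ⟨F, G, hF, hG, h⟩ := ev_theta p hA hB hD
    have hb : ∀ q ∈ frontier U, ‖F q‖ ≤ C ∧ ‖(D q * G q) * G q‖ ≤ C ^ 2 := by
      intro q hq
      obtain ⟨θ, hθ'⟩ := IsAlgClosed.exists_pow_nat_eq (D q) (n := 2) (by norm_num)
      have hθ := hθ'.symm
      have h1 := hC _ (hfr q hq θ hθ.symm)
      have h2 := hC _ (hfr q hq (-θ) (by rw [hθ]; ring))
      rw [h q θ hθ.symm] at h1
      rw [h q (-θ) (by rw [hθ]; ring)] at h2
      have e1 : F q = ((F q + θ * G q) + (F q + -θ * G q)) / 2 := by ring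
      have e2 : θ * G q = ((F q + θ * G q) - (F q + -θ * G q)) / 2 := by ring
      have n1 : ‖F q‖ ≤ C := by
        rw [e1, norm_div]
        have := norm_add_le (F q + θ * G q) (F q + -θ * G q)
        simp only [Complex.norm_ofNat]
        linarith
      have n2 : ‖θ * G q‖ ≤ C := by
        rw [e2, norm_div]
        have := norm_sub_le (F q + θ * G q) (F q + -θ * G q)
        simp only [Complex.norm_ofNat]
        linarith
      refine ⟨n1, ?_⟩
      have : (D q * G q) * G q = (θ * G q) ^ 2 := by rw [hθ]; ring
      rw [this, norm_pow]
      gcongr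
    have i1 := Complex.norm_le_of_forall_mem_frontier_norm_le hU hF (fun q hq => (hb q hq).1) hq
    have i2 := Complex.norm_le_of_forall_mem_frontier_norm_le hU ((hD.smul hG).smul hG)
      (fun q hq => (hb q hq).2) hq
    simp only [smul_eq_mul] at i2
    have e3 : (D q * G q) * G q = (θ * G q) ^ 2 := by rw [← hθ]; ring
    rw [e3, norm_pow] at i2
    have i3 : ‖θ * G q‖ ≤ C := by
      exact (sq_le_sq₀ (norm_nonneg _) hC0).1 i2
    rw [h q θ hθ]
    linarith [norm_add_le (F q) (θ * G q)]
  intro p C hC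
  have hC0 : 0 ≤ C := by
    obtain ⟨w, hw⟩ := hK
    exact (norm_nonneg _).trans (hC w hw)
  by_contra hlt
  push Not at hlt
  have hp : ∀ n : ℕ, ‖ev p (θ * A q, θ * B q)‖ ^ n ≤ 2 * C ^ n := by
    intro n
    have := key (p ^ n) (C ^ n) (fun w hw => by
      have := hC w hw
      simp only [ev, map_pow, norm_pow] at this ⊢
      gcongr)
    simpa only [ev, map_pow, norm_pow] using this
  set r := ‖ev p (θ * A q, θ * B q)‖ with hr
  rcases hC0.eq_or_lt with h0 | h0
  · have := hp 1
    rw [← h0] at this hlt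
    norm_num at this
    linarith
  · obtain ⟨n, hn⟩ := pow_unbounded_of_one_lt 2 ((one_lt_div h0).2 hlt)
    rw [div_pow, lt_div_iff₀ (by positivity)] at hn
    linarith [hp n]

/-- `√3` as a real number -/
noncomputable def s3 : ℝ := Real.sqrt 3

theorem s3_sq : s3 ^ 2 = 3 := Real.sq_sqrt (by norm_num)
theorem s3_pos : 0 < s3 := Real.sqrt_pos.2 (by norm_num)

theorem real_contr {A b n y : ℝ} (hb : 0 < b) (hbA : b ≤ A) (hA : 3 * A < 1)
    (hn : n < A) (hy : y ^ 2 ≤ n) :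
    0 < 3 + n - 2 * s3 * y ∧ 0 < 3 + n + 2 * s3 * y ∧
    b ^ 2 * (3 * n + 1 + 2 * s3 * y) < A * (3 + n - 2 * s3 * y) ∧
    b ^ 2 * (3 * n + 1 - 2 * s3 * y) < A * (3 + n + 2 * s3 * y) ∧
    4 * b / (A * (3 + n - 2 * s3 * y) - b ^ 2 * (3 * n + 1 + 2 * s3 * y)) +
    4 * b / (A * (3 + n + 2 * s3 * y) - b ^ 2 * (3 * n + 1 - 2 * s3 * y)) ≤
      8 * A / (3 - A) / (A - n) := by
  have h3 := s3_sq
  have h3p := s3_pos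
  have hA0 : 0 < A := by linarith
  have hn0 : 0 ≤ n := (sq_nonneg y).trans hy
  have hbb : b ^ 2 ≤ A ^ 2 := by gcongr
  set Y := s3 * y with hY
  have hYY : Y ^ 2 ≤ 3 * n := by rw [hY, mul_pow, h3]; linarith
  have e1 : 2 * s3 * y = 2 * Y := by rw [hY]; ring
  rw [e1]
  have hYn := abs_le.1 (Real.abs_le_sqrt hYY)
  have hP0 : 0 < 3 + n - A * (3 * n + 1) := by nlinarith
  have q1 : (2 * Y * (1 + A)) ^ 2 ≤ 12 * n * (1 + A) ^ 2 := by
    have := mul_le_mul_of_nonneg_right hYY (by positivity : 0 ≤ 4 * (1 + A) ^ 2)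
    linarith
  have q2 : (3 + n - A * (3 * n + 1)) * (3 - A) * (A - n) ≤ A * ((3 + n - A * (3 * n + 1)) ^ 2 - 12 * n * (1 + A) ^ 2) := by
    have : A * ((3 + n - A * (3 * n + 1)) ^ 2 - 12 * n * (1 + A) ^ 2) - (3 + n - A * (3 * n + 1)) * (3 - A) * (A - n) =
      n * (3 * (1 + A) * ((1 - 3 * A) * (3 + A))) + n ^ 2 * ((1 - 3 * A) * (A * (1 - 3 * A) + (3 - A))) := by
      ring
    have h1 : 0 ≤ 1 - 3 * A := by linarith
    have h2 : 0 ≤ 3 - A := by linarith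
    have : 0 ≤ n * (3 * (1 + A) * ((1 - 3 * A) * (3 + A))) + n ^ 2 * ((1 - 3 * A) * (A * (1 - 3 * A) + (3 - A))) := by positivity
    linarith
  have hPQ : (2 * Y * (1 + A)) ^ 2 < (3 + n - A * (3 * n + 1)) ^ 2 := by
    have h1 : 0 < (3 + n - A * (3 * n + 1)) * (3 - A) * (A - n) :=
      mul_pos (mul_pos hP0 (by linarith)) (by linarith)
    have := pos_of_mul_pos_right (h1.trans_le q2) hA0.le
    linarith
  have hab := abs_lt.1 (abs_lt_of_sq_lt_sq hPQ hP0.le)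
  have hEp : 0 < 3 + n - 2 * Y := by nlinarith [sq_nonneg (Y - 1)]
  have hEm : 0 < 3 + n + 2 * Y := by nlinarith [sq_nonneg (Y + 1)]
  have hGp : 0 ≤ 3 * n + 1 + 2 * Y := by nlinarith [sq_nonneg (Y + 1)]
  have hGm : 0 ≤ 3 * n + 1 - 2 * Y := by nlinarith [sq_nonneg (Y - 1)]
  have hGp' := mul_le_mul_of_nonneg_right hbb hGp
  have hGm' := mul_le_mul_of_nonneg_right hbb hGm
  have k1 : 0 < (3 + n - 2 * Y) - A * (3 * n + 1 + 2 * Y) := by linarith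
  have k2 : 0 < (3 + n + 2 * Y) - A * (3 * n + 1 - 2 * Y) := by linarith
  have j1 := mul_pos hA0 k1
  have j2 := mul_pos hA0 k2
  refine ⟨hEp, hEm, by linarith, by linarith, ?_⟩
  have t1 : 4 * b / (A * (3 + n - 2 * Y) - b ^ 2 * (3 * n + 1 + 2 * Y)) ≤
      4 / ((3 + n - 2 * Y) - A * (3 * n + 1 + 2 * Y)) := by
    rw [div_le_div_iff₀ (by linarith) k1]
    have := mul_le_mul_of_nonneg_right hbA k1.le
    linarith
  have t2 : 4 * b / (A * (3 + n + 2 * Y) - b ^ 2 * (3 * n + 1 - 2 * Y)) ≤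
      4 / ((3 + n + 2 * Y) - A * (3 * n + 1 - 2 * Y)) := by
    rw [div_le_div_iff₀ (by linarith) k2]
    have := mul_le_mul_of_nonneg_right hbA k2.le
    linarith
  refine (add_le_add t1 t2).trans ?_
  rw [div_add_div _ _ k1.ne' k2.ne', div_div, div_le_div_iff₀ (mul_pos k1 k2)
    (mul_pos (by linarith) (by linarith))]
  set P := 3 + n - A * (3 * n + 1) with hP
  have hprod : ((3 + n - 2 * Y) - A * (3 * n + 1 + 2 * Y)) * ((3 + n + 2 * Y) - A * (3 * n + 1 - 2 * Y))
      = P ^ 2 - (2 * Y * (1 + A)) ^ 2 := by rw [hP]; ring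
  have hsum : 4 * (3 + n + 2 * Y - A * (3 * n + 1 - 2 * Y)) +
      (3 + n - 2 * Y - A * (3 * n + 1 + 2 * Y)) * 4 = 8 * P := by rw [hP]; ring
  rw [hprod, hsum]
  have := mul_le_mul_of_nonneg_left q1 hA0.le
  linarith

/-- the two contracting maps -/
noncomputable def dP (b : ℝ) (p : ℂ) : ℂ := b * (s3 * p + I) / (s3 + I * p)
/-- the two contracting maps -/
noncomputable def dM (b : ℝ) (p : ℂ) : ℂ := b * (s3 * p - I) / (s3 - I * p)

theorem nsq1 (p : ℂ) : ‖(s3 : ℂ) + I * p‖ ^ 2 = 3 + ‖p‖ ^ 2 - 2 * s3 * p.im := by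
  rw [← normSq_eq_norm_sq, ← normSq_eq_norm_sq]
  simp [normSq_apply]
  linear_combination s3_sq
theorem nsq2 (p : ℂ) : ‖(s3 : ℂ) - I * p‖ ^ 2 = 3 + ‖p‖ ^ 2 + 2 * s3 * p.im := by
  rw [← normSq_eq_norm_sq, ← normSq_eq_norm_sq]
  simp [normSq_apply]
  linear_combination s3_sq
theorem nsq3 (p : ℂ) : ‖(s3 : ℂ) * p + I‖ ^ 2 = 3 * ‖p‖ ^ 2 + 1 + 2 * s3 * p.im := by
  rw [← normSq_eq_norm_sq, ← normSq_eq_norm_sq]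
  simp [normSq_apply]
  linear_combination (p.re ^ 2 + p.im ^ 2) * s3_sq
theorem nsq4 (p : ℂ) : ‖(s3 : ℂ) * p - I‖ ^ 2 = 3 * ‖p‖ ^ 2 + 1 - 2 * s3 * p.im := by
  rw [← normSq_eq_norm_sq, ← normSq_eq_norm_sq]
  simp [normSq_apply]
  linear_combination (p.re ^ 2 + p.im ^ 2) * s3_sq

theorem contr {A b : ℝ} {p : ℂ} (hb : 0 < b) (hbA : b ≤ A) (hA : 3 * A < 1) (hp : ‖p‖ ^ 2 < A) :
    (s3 : ℂ) + I * p ≠ 0 ∧ (s3 : ℂ) - I * p ≠ 0 ∧ ‖dP b p‖ ^ 2 < A ∧ ‖dM b p‖ ^ 2 < A ∧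
    ‖4 * (b : ℂ) / ((s3 : ℂ) + I * p) ^ 2‖ / (A - ‖dP b p‖ ^ 2) +
    ‖4 * (b : ℂ) / ((s3 : ℂ) - I * p) ^ 2‖ / (A - ‖dM b p‖ ^ 2) ≤
      8 * A / (3 - A) / (A - ‖p‖ ^ 2) := by
  have hy : p.im ^ 2 ≤ ‖p‖ ^ 2 := by
    rw [← normSq_eq_norm_sq, normSq_apply]; nlinarith [mul_self_nonneg p.re]
  obtain ⟨h1, h2, h3, h4, h5⟩ := real_contr hb hbA hA hp hy
  have n1 : ‖(s3 : ℂ) + I * p‖ ^ 2 ≠ 0 := by rw [nsq1]; exact h1.ne'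
  have n2 : ‖(s3 : ℂ) - I * p‖ ^ 2 ≠ 0 := by rw [nsq2]; exact h2.ne'
  have eP : ‖dP b p‖ ^ 2 = b ^ 2 * (3 * ‖p‖ ^ 2 + 1 + 2 * s3 * p.im) / (3 + ‖p‖ ^ 2 - 2 * s3 * p.im) := by
    rw [dP, norm_div, norm_mul, div_pow, mul_pow, nsq1, nsq3]; simp
  have eM : ‖dM b p‖ ^ 2 = b ^ 2 * (3 * ‖p‖ ^ 2 + 1 - 2 * s3 * p.im) / (3 + ‖p‖ ^ 2 + 2 * s3 * p.im) := by
    rw [dM, norm_div, norm_mul, div_pow, mul_pow, nsq2, nsq4]; simp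
  have fP : ‖4 * (b : ℂ) / ((s3 : ℂ) + I * p) ^ 2‖ = 4 * b / (3 + ‖p‖ ^ 2 - 2 * s3 * p.im) := by
    rw [norm_div, norm_pow, nsq1]; simp [abs_of_pos hb]
  have fM : ‖4 * (b : ℂ) / ((s3 : ℂ) - I * p) ^ 2‖ = 4 * b / (3 + ‖p‖ ^ 2 + 2 * s3 * p.im) := by
    rw [norm_div, norm_pow, nsq2]; simp [abs_of_pos hb]
  refine ⟨by rintro h; simp [h] at n1, by rintro h; simp [h] at n2, ?_, ?_, ?_⟩
  · rw [eP, div_lt_iff₀ h1]; exact h3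
  · rw [eM, div_lt_iff₀ h2]; exact h4
  · rw [eP, eM, fP, fM]
    convert h5 using 2
    · rw [div_div, mul_sub, mul_div_cancel₀ _ h1.ne']; ring
    · rw [div_div, mul_sub, mul_div_cancel₀ _ h2.ne']; ring

/-- the function `u` in the coordinate `p` -/
noncomputable def uu (ρ : ℝ) (p : ℂ) : ℂ := ρ * (1 + p) / (1 - p)
/-- the inhomogeneity -/
noncomputable def NN (ρ : ℝ) (p : ℂ) : ℂ := uu ρ p ^ 2 + uu ρ p + 1
/-- minus its logarithmic derivative -/
noncomputable def f0 (ρ : ℝ) (p : ℂ) : ℂ :=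
  -((2 * uu ρ p + 1) * (2 * ρ / (1 - p) ^ 2)) / NN ρ p
/-- the iterates -/
noncomputable def fn (ρ b : ℝ) : ℕ → ℂ → ℂ
  | 0 => f0 ρ
  | n + 1 => fun p => 4 * (b : ℂ) / ((s3 : ℂ) + I * p) ^ 2 * fn ρ b n (dP b p) +
      4 * (b : ℂ) / ((s3 : ℂ) - I * p) ^ 2 * fn ρ b n (dM b p)

theorem one_sub_ne {p : ℂ} (hp : ‖p‖ < 1) : 1 - p ≠ 0 := by
  intro h
  have : p = 1 := by linear_combination -h
  simp [this] at hp

theorem NN_ne {ρ : ℝ} (hρ : 0 < ρ) {p : ℂ} (hp : ‖p‖ < 1) : NN ρ p ≠ 0 := by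
  have h1 := one_sub_ne hp
  have hre : 0 < (uu ρ p).re := by
    have : uu ρ p = ((ρ / normSq (1 - p) : ℝ) : ℂ) * ((1 + p) * conj (1 - p)) := by
      have h2 : (normSq (1 - p) : ℂ) = (1 - p) * conj (1 - p) := (mul_conj _).symm
      have h3 : conj (1 - p) ≠ 0 := (map_ne_zero _).2 h1
      push_cast
      rw [h2, uu]
      field_simp
    rw [this, re_ofReal_mul]
    refine mul_pos (div_pos hρ (normSq_pos.2 h1)) ?_
    have : ‖p‖ ^ 2 < 1 := by nlinarith [norm_nonneg p]
    rw [← normSq_eq_norm_sq, normSq_apply] at this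
    simp
    nlinarith
  intro h
  rw [NN] at h
  set u := uu ρ p
  have hi := congrArg Complex.im h
  have hr := congrArg Complex.re h
  simp [pow_two] at hi hr
  have : u.im = 0 := by
    have : u.im * (2 * u.re + 1) = 0 := by linarith
    rcases mul_eq_zero.1 this with h | h
    · exact h
    · linarith
  rw [this] at hr
  nlinarith

theorem hasDeriv_uu {ρ : ℝ} {p : ℂ} (hp : ‖p‖ < 1) :
    HasDerivAt (uu ρ) (2 * ρ / (1 - p) ^ 2) p := by
  have h1 := one_sub_ne hp
  have := (((hasDerivAt_id p).const_add 1).const_mul (ρ : ℂ)).div ((hasDerivAt_id p).const_sub 1) h1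
  refine HasDerivAt.congr_deriv (f := _) this ?_
  simp; ring

theorem hasDeriv_NN {ρ : ℝ} {p : ℂ} (hp : ‖p‖ < 1) :
    HasDerivAt (NN ρ) ((2 * uu ρ p + 1) * (2 * ρ / (1 - p) ^ 2)) p := by
  have h := hasDeriv_uu (ρ := ρ) hp
  have := ((h.pow 2).add h).add_const 1
  refine HasDerivAt.congr_deriv (f := _) this ?_
  simp; ring

theorem hasDeriv_dP {b : ℝ} {p : ℂ} (h : (s3 : ℂ) + I * p ≠ 0) :
    HasDerivAt (dP b) (4 * (b : ℂ) / ((s3 : ℂ) + I * p) ^ 2) p := by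
  have := ((((hasDerivAt_id p).const_mul (s3 : ℂ)).add_const I).const_mul (b : ℂ)).div
    (((hasDerivAt_id p).const_mul I).const_add (s3 : ℂ)) h
  refine HasDerivAt.congr_deriv (f := _) this ?_
  have hs : (s3 : ℂ) ^ 2 = 3 := by exact_mod_cast s3_sq
  congr 1
  simp
  linear_combination (b : ℂ) * hs - (b : ℂ) * I_sq

theorem hasDeriv_dM {b : ℝ} {p : ℂ} (h : (s3 : ℂ) - I * p ≠ 0) :
    HasDerivAt (dM b) (4 * (b : ℂ) / ((s3 : ℂ) - I * p) ^ 2) p := by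
  have := ((((hasDerivAt_id p).const_mul (s3 : ℂ)).sub_const I).const_mul (b : ℂ)).div
    (((hasDerivAt_id p).const_mul I).const_sub (s3 : ℂ)) h
  refine HasDerivAt.congr_deriv (f := _) this ?_
  have hs : (s3 : ℂ) ^ 2 = 3 := by exact_mod_cast s3_sq
  congr 1
  simp
  linear_combination (b : ℂ) * hs - (b : ℂ) * I_sq

theorem conj_dP (b : ℝ) (p : ℂ) : dP b (conj p) = conj (dM b p) := by
  simp [dP, dM, map_div₀]
theorem conj_dM (b : ℝ) (p : ℂ) : dM b (conj p) = conj (dP b p) := by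
  simp [dP, dM, map_div₀, sub_eq_add_neg]
theorem conj_uu (ρ : ℝ) (p : ℂ) : uu ρ (conj p) = conj (uu ρ p) := by
  simp [uu, map_div₀]
theorem conj_NN (ρ : ℝ) (p : ℂ) : NN ρ (conj p) = conj (NN ρ p) := by
  simp [NN, conj_uu]
theorem conj_fn (ρ b : ℝ) (n : ℕ) (p : ℂ) : fn ρ b n (conj p) = conj (fn ρ b n p) := by
  induction n generalizing p with
  | zero =>
    have h2 : conj (2 : ℂ) = 2 := map_ofNat _ 2
    simp [fn, f0, conj_NN, conj_uu, map_div₀, h2]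
  | succ n ih =>
    simp only [fn, conj_dP, conj_dM, ih, map_add, map_mul, map_div₀, map_pow, map_sub, conj_I, conj_ofReal, map_ofNat]
    ring

theorem fn_diff {ρ b A : ℝ} (hρ : 0 < ρ) (hb : 0 < b) (hbA : b ≤ A) (hA : 3 * A < 1) (n : ℕ)
    {p : ℂ} (hp : ‖p‖ ^ 2 < A) : DifferentiableAt ℂ (fn ρ b n) p := by
  induction n generalizing p with
  | zero =>
    have hp1 : ‖p‖ < 1 := by nlinarith [norm_nonneg p]
    have h1 := one_sub_ne hp1
    have := NN_ne hρ hp1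
    have h2 := (hasDeriv_uu (ρ := ρ) hp1).differentiableAt
    have h3 := (hasDeriv_NN (ρ := ρ) hp1).differentiableAt
    show DifferentiableAt ℂ (f0 ρ) p
    unfold f0
    have h4 : (1 - p) ^ 2 ≠ 0 := pow_ne_zero _ h1
    fun_prop (disch := assumption)
  | succ n ih =>
    obtain ⟨h1, h2, h3, h4, -⟩ := contr hb hbA hA hp
    have k1 := (ih h3).comp p (hasDeriv_dP (b := b) h1).differentiableAt
    have k2 := (ih h4).comp p (hasDeriv_dM (b := b) h2).differentiableAt
    have h5 := pow_ne_zero 2 h1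
    have h6 := pow_ne_zero 2 h2
    show DifferentiableAt ℂ (fun p => 4 * (b : ℂ) / ((s3 : ℂ) + I * p) ^ 2 * (fn ρ b n ∘ dP b) p +
      4 * (b : ℂ) / ((s3 : ℂ) - I * p) ^ 2 * (fn ρ b n ∘ dM b) p) p
    fun_prop (disch := assumption)

theorem fn_bound {ρ b A : ℝ} (hρ : 0 < ρ) (hb : 0 < b) (hbA : b ≤ A) (hA : 3 * A < 1) :
    ∃ C, 0 ≤ C ∧ ∀ n (p : ℂ), ‖p‖ ^ 2 < A →
      ‖fn ρ b n p‖ ≤ C * (8 * A / (3 - A)) ^ n / (A - ‖p‖ ^ 2) := by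
  have hA0 : 0 < A := by linarith
  have hs : Real.sqrt A ^ 2 = A := Real.sq_sqrt hA0.le
  obtain ⟨C0, hC0⟩ : ∃ C0, ∀ p ∈ Metric.closedBall (0 : ℂ) (Real.sqrt A), ‖f0 ρ p‖ ≤ C0 := by
    refine (isCompact_closedBall (0 : ℂ) (Real.sqrt A)).exists_bound_of_continuousOn ?_
    intro p hp
    have hp' : ‖p‖ ≤ Real.sqrt A := by simpa using hp
    have : ‖p‖ ^ 2 ≤ A := by rw [← hs]; gcongr
    exact (fn_diff (A := (A + 1 / 3) / 2) hρ hb (by linarith) (by linarith) 0 (p := p)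
      (by linarith)).continuousAt.continuousWithinAt
  have hC0' : 0 ≤ C0 := (norm_nonneg _).trans (hC0 0 (by simp))
  refine ⟨C0 * A, by positivity, fun n => ?_⟩
  induction n with
  | zero =>
    intro p hp
    have h1 := hC0 p (by simpa using Real.le_sqrt_of_sq_le hp.le)
    refine h1.trans ?_
    rw [pow_zero, mul_one, le_div_iff₀ (by linarith)]
    nlinarith [sq_nonneg ‖p‖]
  | succ n ih =>
    intro p hp
    obtain ⟨h1, h2, h3, h4, h5⟩ := contr hb hbA hA hp
    have hl : 0 ≤ 8 * A / (3 - A) := div_nonneg (by linarith) (by linarith)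
    calc ‖fn ρ b (n + 1) p‖ ≤ ‖4 * (b : ℂ) / ((s3 : ℂ) + I * p) ^ 2‖ * ‖fn ρ b n (dP b p)‖ +
          ‖4 * (b : ℂ) / ((s3 : ℂ) - I * p) ^ 2‖ * ‖fn ρ b n (dM b p)‖ := by
            rw [← norm_mul, ← norm_mul]; exact norm_add_le _ _
      _ ≤ ‖4 * (b : ℂ) / ((s3 : ℂ) + I * p) ^ 2‖ * (C0 * A * (8 * A / (3 - A)) ^ n / (A - ‖dP b p‖ ^ 2)) +
          ‖4 * (b : ℂ) / ((s3 : ℂ) - I * p) ^ 2‖ * (C0 * A * (8 * A / (3 - A)) ^ n / (A - ‖dM b p‖ ^ 2)) := by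
            gcongr
            · exact ih _ h3
            · exact ih _ h4
      _ = C0 * A * (8 * A / (3 - A)) ^ n * (‖4 * (b : ℂ) / ((s3 : ℂ) + I * p) ^ 2‖ / (A - ‖dP b p‖ ^ 2) +
          ‖4 * (b : ℂ) / ((s3 : ℂ) - I * p) ^ 2‖ / (A - ‖dM b p‖ ^ 2)) := by ring
      _ ≤ C0 * A * (8 * A / (3 - A)) ^ n * (8 * A / (3 - A) / (A - ‖p‖ ^ 2)) := by gcongr
      _ = _ := by rw [pow_succ]; ring

theorem exists_f {ρ b : ℝ} (hρ : 0 < ρ) (hb : 0 < b) (hb3 : 3 * b < 1) :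
    ∃ r : ℝ, 0 < r ∧ b < r ^ 2 ∧ 3 * r ^ 2 < 1 ∧ ∃ f : ℂ → ℂ,
      DifferentiableOn ℂ f (Metric.ball 0 r) ∧ (∀ p, f (conj p) = conj (f p)) ∧
      ∀ p ∈ Metric.ball (0 : ℂ) r, f p = f0 ρ p +
        (4 * (b : ℂ) / ((s3 : ℂ) + I * p) ^ 2 * f (dP b p) +
          4 * (b : ℂ) / ((s3 : ℂ) - I * p) ^ 2 * f (dM b p)) := by
  obtain ⟨A, hA1, hA2⟩ : ∃ A, b < A ∧ A < 1 / 3 := exists_between (by linarith)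
  obtain ⟨A1, hA3, hA4⟩ : ∃ A1, b < A1 ∧ A1 < A := exists_between hA1
  have hA10 : 0 < A1 := by linarith
  have hr : Real.sqrt A1 ^ 2 = A1 := Real.sq_sqrt hA10.le
  have hball : ∀ p : ℂ, p ∈ Metric.ball (0 : ℂ) (Real.sqrt A1) ↔ ‖p‖ ^ 2 < A1 := by
    intro p
    rw [mem_ball_zero_iff, Real.lt_sqrt (norm_nonneg _)]
  obtain ⟨C, hC, hCb⟩ := fn_bound hρ hb hA1.le (by linarith : 3 * A < 1)
  have hl0 : 0 ≤ 8 * A / (3 - A) := div_nonneg (by linarith) (by linarith)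
  have hl1 : 8 * A / (3 - A) < 1 := by rw [div_lt_one (by linarith)]; linarith
  have hsum : Summable (fun n : ℕ => C * (8 * A / (3 - A)) ^ n / (A - A1)) :=
    ((summable_geometric_of_lt_one hl0 hl1).mul_left C).div_const _
  have hle : ∀ (n : ℕ) (p : ℂ), p ∈ Metric.ball (0 : ℂ) (Real.sqrt A1) →
      ‖fn ρ b n p‖ ≤ C * (8 * A / (3 - A)) ^ n / (A - A1) := by
    intro n p hp
    have hp' := (hball p).1 hp
    refine (hCb n p (by linarith)).trans ?_
    have : 0 < A - A1 := by linarith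
    gcongr
  have hs : ∀ p ∈ Metric.ball (0 : ℂ) (Real.sqrt A1), Summable (fun n => fn ρ b n p) :=
    fun p hp => Summable.of_norm_bounded hsum (fun n => hle n p hp)
  refine ⟨Real.sqrt A1, Real.sqrt_pos.2 hA10, by rw [hr]; exact hA3, by rw [hr]; linarith,
    fun p => ∑' n, fn ρ b n p, ?_, ?_, ?_⟩
  · refine differentiableOn_tsum_of_summable_norm hsum (fun n p hp => ?_) Metric.isOpen_ball hle
    exact (fn_diff hρ hb hA3.le (by linarith) n ((hball p).1 hp)).differentiableWithinAt
  · intro p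
    simp only [conj_fn]
    exact (conj_tsum _).symm
  · intro p hp
    obtain ⟨-, -, h3, h4, -⟩ := contr hb hA3.le (by linarith) ((hball p).1 hp)
    have h5 := hs _ ((hball _).2 h3)
    have h6 := hs _ ((hball _).2 h4)
    simp only
    rw [(hs p hp).tsum_eq_zero_add, ← tsum_mul_left, ← tsum_mul_left,
      ← (h5.mul_left _).tsum_add (h6.mul_left _)]
    rfl

theorem exists_m {ρ b : ℝ} (hρ : 0 < ρ) (hb : 0 < b) (hb3 : 3 * b < 1) :
    ∃ r : ℝ, 0 < r ∧ b < r ^ 2 ∧ 3 * r ^ 2 < 1 ∧ ∃ (m : ℂ → ℂ) (c : ℝ), 0 < c ∧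
      (∀ p ∈ Metric.ball (0 : ℂ) r, DifferentiableAt ℂ m p) ∧
      (∀ p ∈ Metric.ball (0 : ℂ) r, m (conj p) = conj (m p)) ∧
      ∀ p ∈ Metric.ball (0 : ℂ) r,
        exp (m p - m (dP b p) - m (dM b p)) * NN ρ p = c := by
  obtain ⟨r, hr0, hr1, hr2, f, hf, hfc, hfe⟩ := exists_f hρ hb hb3
  obtain ⟨m, hm0, hm⟩ := hf.isExactOn_ball.with_val_at 0 0
  have hr3 : r < 1 := by nlinarith
  have hball : ∀ p : ℂ, p ∈ Metric.ball (0 : ℂ) r ↔ ‖p‖ ^ 2 < r ^ 2 := by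
    intro p
    rw [mem_ball_zero_iff, sq_lt_sq₀ (norm_nonneg _) hr0.le]
  have hz : (0 : ℂ) ∈ Metric.ball (0 : ℂ) r := by simpa using hr0
  have hmc : ∀ p ∈ Metric.ball (0 : ℂ) r, m (conj p) = conj (m p) := by
    have hd : ∀ p ∈ Metric.ball (0 : ℂ) r, HasDerivAt (conj ∘ m ∘ conj) (f p) p := by
      intro p hp
      have hp' : conj p ∈ Metric.ball (0 : ℂ) r := by simpa using hp
      have := (hm _ hp').conj_conj
      rw [hfc] at this
      simpa using this
    have := IsOpen.eqOn_of_deriv_eq (f := conj ∘ m ∘ conj) (g := m) Metric.isOpen_ball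
      (convex_ball (0 : ℂ) r).isPreconnected
      (fun p hp => (hd p hp).differentiableAt.differentiableWithinAt)
      (fun p hp => (hm p hp).differentiableAt.differentiableWithinAt)
      (fun p hp => by rw [(hd p hp).deriv, (hm p hp).deriv]) hz (by simp [hm0])
    intro p hp
    have h := this hp
    simp only [Function.comp] at h
    rw [← h]; simp
  have hG : ∀ p ∈ Metric.ball (0 : ℂ) r,
      HasDerivAt (fun p => exp (m p - m (dP b p) - m (dM b p)) * NN ρ p) 0 p := by
    intro p hp
    have hp1 : ‖p‖ < 1 := by rw [mem_ball_zero_iff] at hp; linarith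
    obtain ⟨h1, h2, h3, h4, -⟩ := contr hb hr1.le hr2 ((hball p).1 hp)
    have k1 := (hm _ ((hball _).2 h3)).comp p (hasDeriv_dP (b := b) h1)
    have k2 := (hm _ ((hball _).2 h4)).comp p (hasDeriv_dM (b := b) h2)
    have k := ((((hm p hp).sub k1).sub k2).cexp).mul (hasDeriv_NN (ρ := ρ) hp1)
    refine HasDerivAt.congr_deriv (f := _) k ?_
    have hN := NN_ne hρ hp1
    rw [hfe p hp, f0]
    simp only [Pi.sub_apply, Function.comp]
    field_simp
    ring
  have hconst : ∀ p ∈ Metric.ball (0 : ℂ) r,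
      exp (m p - m (dP b p) - m (dM b p)) * NN ρ p =
      exp (m 0 - m (dP b 0) - m (dM b 0)) * NN ρ 0 := by
    intro p hp
    exact IsOpen.is_const_of_deriv_eq_zero
      (f := fun p => exp (m p - m (dP b p) - m (dM b p)) * NN ρ p) Metric.isOpen_ball
      (convex_ball (0 : ℂ) r).isPreconnected
      (fun p hp => (hG p hp).differentiableAt.differentiableWithinAt)
      (fun p hp => (hG p hp).deriv) hp hz
  have hc0 : dM b 0 = conj (dP b 0) := by rw [← conj_dM]; simp
  obtain ⟨h1, h2, h3, h4, -⟩ := contr hb hr1.le hr2 ((hball 0).1 hz)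
  have hreal : exp (m 0 - m (dP b 0) - m (dM b 0)) * NN ρ 0 =
      ((Real.exp (-(2 * (m (dP b 0)).re)) * (ρ ^ 2 + ρ + 1) : ℝ) : ℂ) := by
    rw [hc0, hmc _ ((hball _).2 h3), hm0, zero_sub, ← neg_add', add_conj]
    simp [NN, uu]
  refine ⟨r, hr0, hr1, hr2, m, _, ?_, fun p hp => (hm p hp).differentiableAt, hmc,
    fun p hp => (hconst p hp).trans hreal⟩
  positivity

/-- the deck maps in the coordinate `q` -/
noncomputable def psP (b : ℝ) (q : ℂ) : ℂ := b * (q + I * s3 * b) / (b + I * s3 * q)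
/-- the deck maps in the coordinate `q` -/
noncomputable def psM (b : ℝ) (q : ℂ) : ℂ := b * (q - I * s3 * b) / (b - I * s3 * q)

theorem s3c : (s3 : ℂ) ^ 2 = 3 := by exact_mod_cast s3_sq

section psalg
variable {b : ℝ} {q : ℂ}

theorem psPP (hb : 0 < b) (h1 : (b : ℂ) + I * s3 * q ≠ 0) (h2 : (b : ℂ) - I * s3 * q ≠ 0) :
    psP b (psP b q) = psM b q := by
  have h1x : (b : ℂ) + q * I * s3 ≠ 0 := by convert h1 using 1; ring
  have h2x : (b : ℂ) - q * I * s3 ≠ 0 := by convert h2 using 1; ring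
  have hb' : (b : ℂ) ≠ 0 := by exact_mod_cast hb.ne'
  have k : (b : ℂ) + I * s3 * psP b q = -2 * b * (b - I * s3 * q) / (b + I * s3 * q) := by
    rw [psP]; field_simp
    linear_combination (b : ℂ) * (s3 ^ 2 * I_sq - s3c)
  rw [psP, k, psP, psM]
  field_simp
  linear_combination -q * (s3 ^ 2 * I_sq - s3c)

theorem psMM (hb : 0 < b) (h1 : (b : ℂ) + I * s3 * q ≠ 0) (h2 : (b : ℂ) - I * s3 * q ≠ 0) :
    psM b (psM b q) = psP b q := by
  have h1x : (b : ℂ) + q * I * s3 ≠ 0 := by convert h1 using 1; ring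
  have h2x : (b : ℂ) - q * I * s3 ≠ 0 := by convert h2 using 1; ring
  have hb' : (b : ℂ) ≠ 0 := by exact_mod_cast hb.ne'
  have k : (b : ℂ) - I * s3 * psM b q = -2 * b * (b + I * s3 * q) / (b - I * s3 * q) := by
    rw [psM]; field_simp
    linear_combination (b : ℂ) * (s3 ^ 2 * I_sq - s3c)
  rw [psM, k, psM, psP]
  field_simp
  linear_combination -q * (s3 ^ 2 * I_sq - s3c)

theorem psPM (hb : 0 < b) (h2 : (b : ℂ) - I * s3 * q ≠ 0) :
    psP b (psM b q) = q := by
  have h2x : (b : ℂ) - q * I * s3 ≠ 0 := by convert h2 using 1; ring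
  have hb' : (b : ℂ) ≠ 0 := by exact_mod_cast hb.ne'
  have k : (b : ℂ) + I * s3 * psM b q = 4 * b ^ 2 / (b - I * s3 * q) := by
    rw [psM]; field_simp
    linear_combination (b : ℂ) * (-s3 ^ 2 * I_sq + s3c)
  rw [psP, k, psM]
  field_simp
  linear_combination q * (-s3 ^ 2 * I_sq + s3c)

theorem psMP (hb : 0 < b) (h1 : (b : ℂ) + I * s3 * q ≠ 0) :
    psM b (psP b q) = q := by
  have h1x : (b : ℂ) + q * I * s3 ≠ 0 := by convert h1 using 1; ring
  have hb' : (b : ℂ) ≠ 0 := by exact_mod_cast hb.ne'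
  have k : (b : ℂ) - I * s3 * psP b q = 4 * b ^ 2 / (b + I * s3 * q) := by
    rw [psP]; field_simp
    linear_combination (b : ℂ) * (-s3 ^ 2 * I_sq + s3c)
  rw [psM, k, psP]
  field_simp
  linear_combination q * (-s3 ^ 2 * I_sq + s3c)

end psalg
/-- the function `u` in the coordinate `q` -/
noncomputable def uq (ρ b : ℝ) (q : ℂ) : ℂ := ρ * (q + b) / (q - b)

theorem om_ne : (1 : ℂ) - I * s3 ≠ 0 ∧ (1 : ℂ) + I * s3 ≠ 0 := by
  constructor <;> (intro h; simpa using congrArg Complex.re h)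

theorem uqP {ρ b : ℝ} {q : ℂ} (hb : 0 < b) (h1 : (b : ℂ) + I * s3 * q ≠ 0) (hq : q - b ≠ 0) :
    psP b q - b ≠ 0 ∧ uq ρ b (psP b q) ^ 3 = uq ρ b q ^ 3 := by
  have h1x : (b : ℂ) + q * I * s3 ≠ 0 := by convert h1 using 1; ring
  have hb' : (b : ℂ) ≠ 0 := by exact_mod_cast hb.ne'
  have e1 : psP b q - b = b * (q - b) * (1 - I * s3) / (b + I * s3 * q) := by
    rw [psP]; field_simp; ring
  have e2 : psP b q + b = b * (q + b) * (1 + I * s3) / (b + I * s3 * q) := by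
    rw [psP]; field_simp; ring
  obtain ⟨o1, o2⟩ := om_ne
  have ho : ((1 + I * s3) / (1 - I * s3)) ^ 3 = (1 : ℂ) := by
    rw [div_pow, div_eq_one_iff_eq (pow_ne_zero _ o1)]
    linear_combination 2 * I * s3 * (s3 ^ 2 * I_sq - s3c)
  refine ⟨by rw [e1]; exact div_ne_zero (mul_ne_zero (mul_ne_zero hb' hq) o1) h1, ?_⟩
  have : uq ρ b (psP b q) = uq ρ b q * ((1 + I * s3) / (1 - I * s3)) := by
    rw [uq, uq, e1, e2]; field_simp
  rw [this, mul_pow, ho, mul_one]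

theorem uqM {ρ b : ℝ} {q : ℂ} (hb : 0 < b) (h1 : (b : ℂ) - I * s3 * q ≠ 0) (hq : q - b ≠ 0) :
    psM b q - b ≠ 0 ∧ uq ρ b (psM b q) ^ 3 = uq ρ b q ^ 3 := by
  have h1x : (b : ℂ) - q * I * s3 ≠ 0 := by convert h1 using 1; ring
  have hb' : (b : ℂ) ≠ 0 := by exact_mod_cast hb.ne'
  have e1 : psM b q - b = b * (q - b) * (1 + I * s3) / (b - I * s3 * q) := by
    rw [psM]; field_simp; ring
  have e2 : psM b q + b = b * (q + b) * (1 - I * s3) / (b - I * s3 * q) := by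
    rw [psM]; field_simp; ring
  obtain ⟨o1, o2⟩ := om_ne
  have ho : ((1 - I * s3) / (1 + I * s3)) ^ 3 = (1 : ℂ) := by
    rw [div_pow, div_eq_one_iff_eq (pow_ne_zero _ o2)]
    linear_combination -2 * I * s3 * (s3 ^ 2 * I_sq - s3c)
  refine ⟨by rw [e1]; exact div_ne_zero (mul_ne_zero (mul_ne_zero hb' hq) o2) h1, ?_⟩
  have : uq ρ b (psM b q) = uq ρ b q * ((1 - I * s3) / (1 + I * s3)) := by
    rw [uq, uq, e1, e2]; field_simp
  rw [this, mul_pow, ho, mul_one]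

/-- the symmetrised exponent -/
noncomputable def Es (m : ℂ → ℂ) (b : ℝ) (q : ℂ) : ℂ := exp (m q + m (psP b q) + m (psM b q))

theorem core {t e b ρ r c : ℝ} {m : ℂ → ℂ} (he : 0 < e) (he1 : e < 1) (hbe : b = e ^ 2)
    (hρ : ρ * (1 + b) = 1 - b) (ht : t * (1 + b) = 2 * e) (hρ0 : 0 < ρ) (hr : e < r) (hc : 0 < c)
    (hmc : ∀ p ∈ Metric.ball (0 : ℂ) r, m (conj p) = conj (m p))
    (hme : ∀ p ∈ Metric.ball (0 : ℂ) r,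
        exp (m p - m (dP b p) - m (dM b p)) * NN ρ p = c)
    {q : ℂ} (hq : ‖q‖ = e) (hqb : q - b ≠ 0) {z : ℂ}
    (hz : z ^ 2 * (uq ρ b q ^ 3 - 1) = t ^ 3 * Es m b q) :
    z + t * conj z = z * uq ρ b q := by
  have hb : 0 < b := by rw [hbe]; positivity
  have ht0 : 0 < t := by
    by_contra h; nlinarith
  have htc : (t : ℂ) ≠ 0 := by exact_mod_cast ht0.ne'
  have hcc : (c : ℂ) ≠ 0 := by exact_mod_cast hc.ne'
  have hb' : (b : ℂ) ≠ 0 := by exact_mod_cast hb.ne'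
  have hqp : q * conj q = b := by
    rw [mul_conj, normSq_eq_norm_sq, hq, hbe]
  have hq0 : q ≠ 0 := by rintro rfl; simp at hq; linarith
  set p := conj q with hp
  have hpn : ‖p‖ = e := by rw [hp, norm_conj, hq]
  have hpb : p ∈ Metric.ball (0 : ℂ) r := by rw [mem_ball_zero_iff, hpn]; exact hr
  have hpe : p = b / q := by rw [← hqp]; field_simp
  have hI : ∀ x : ℂ, x * I ≠ 0 ↔ x ≠ 0 := fun x => by simp
  have e1 : psP b q = dM b p := by
    rw [psP, dM, hpe]
    have a1 : (b : ℂ) + I * s3 * q = I * q * (s3 - I * (b / q)) := by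
      field_simp; linear_combination (b : ℂ) * I_sq
    have a2 : (b : ℂ) * (q + I * s3 * b) = I * q * (b * (s3 * (b / q) - I)) := by
      field_simp; linear_combination (q : ℂ) * I_sq
    rw [a1, a2, mul_div_mul_left _ _ (mul_ne_zero I_ne_zero hq0)]
  have e2 : psM b q = dP b p := by
    rw [psM, dP, hpe]
    have a1 : (b : ℂ) - I * s3 * q = (-I * q) * (s3 + I * (b / q)) := by
      field_simp; linear_combination (b : ℂ) * I_sq
    have a2 : (b : ℂ) * (q - I * s3 * b) = (-I * q) * (b * (s3 * (b / q) + I)) := by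
      field_simp; linear_combination (q : ℂ) * I_sq
    rw [a1, a2, mul_div_mul_left _ _ (mul_ne_zero (neg_ne_zero.2 I_ne_zero) hq0)]
  have hu : uu ρ p = uq ρ b q := by
    rw [uu, uq, hpe]
    have : (1 : ℂ) - b / q = (q - b) / q := by field_simp
    rw [this]; field_simp
  have hmq : m q = conj (m p) := by
    rw [← hmc p hpb, hp, conj_conj]
  have hN := hme p hpb
  have hEs : Es m b q * c = (normSq (exp (m p)) : ℂ) * NN ρ p := by
    have hx : exp (m (dP b p) + m (dM b p)) * exp (m p - m (dP b p) - m (dM b p)) = exp (m p) := by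
      rw [← Complex.exp_add]; congr 1; ring
    have hE : Es m b q = exp (conj (m p)) * exp (m (dP b p) + m (dM b p)) := by
      rw [Es, e1, e2, hmq, ← Complex.exp_add]; congr 1; ring
    rw [hE, ← mul_conj, ← hN, ← exp_conj]
    linear_combination exp (conj (m p)) * NN ρ p * hx
  have hNe : NN ρ p ≠ 0 := NN_ne hρ0 (by rw [hpn]; exact he1)
  set u := uq ρ b q with hud
  obtain ⟨η, hη⟩ : ∃ η, η = (u - 1) / t := ⟨_, rfl⟩
  have huη : u = 1 + t * η := by rw [hη]; field_simp; ring
  have hρc : (ρ : ℂ) * (1 + b) = 1 - b := by exact_mod_cast hρ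
  have htc2 : (t : ℂ) * (1 + b) = 2 * e := by exact_mod_cast ht
  have hbec : (b : ℂ) = e ^ 2 := by exact_mod_cast hbe
  have h1b : (1 : ℂ) + b ≠ 0 := by
    have : 1 + b ≠ 0 := by positivity
    exact_mod_cast this
  have hec : (e : ℂ) ≠ 0 := by exact_mod_cast he.ne'
  have hη2 : η * (q - b) = e * (1 - q) := by
    have h1 : t * (η * (q - b)) = ρ * (q + b) - (q - b) := by
      have : u * (q - b) = ρ * (q + b) := by rw [hud, uq]; field_simp
      rw [huη] at this
      linear_combination this
    have h2 : (t * (1 + b) : ℂ) * (η * (q - b)) = (t * (1 + b)) * (e * (1 - q)) := by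
      linear_combination (1 + (b : ℂ)) * h1 - e * (1 - q) * htc2 + (q + b) * hρc + 2 * (1 - q) * hbec
    exact mul_left_cancel₀ (mul_ne_zero htc h1b) h2
  have hη3 : η * conj η = 1 := by
    have h1 : conj η * (p - b) = e * (1 - p) := by
      have := congrArg conj hη2
      simpa using this
    have h2 : p - b ≠ 0 := by
      have := (map_ne_zero (starRingEnd ℂ)).2 hqb
      simpa using this
    have h3 : (η * conj η) * ((q - b) * (p - b)) = 1 * ((q - b) * (p - b)) := by
      linear_combination conj η * (p - b) * hη2 + e * (1 - q) * h1 + (b - 1) * hqp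
        - (1 - q) * (1 - p) * hbec
    exact mul_right_cancel₀ (mul_ne_zero hqb h2) h3
  obtain ⟨R, hR⟩ : ∃ R : ℝ, R = t ^ 2 * normSq (exp (m p)) / c := ⟨_, rfl⟩
  have hR0 : 0 < R := by
    rw [hR]
    have := normSq_pos.2 (Complex.exp_ne_zero (m p))
    positivity
  have hzη : z ^ 2 * η = R := by
    have h1 : u ^ 3 - 1 = t * η * NN ρ p := by
      rw [NN, hu, huη]; ring
    rw [h1] at hz
    have h2 : z ^ 2 * η * (t * NN ρ p * c) = R * (t * NN ρ p * c) := by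
      have hRc : (R : ℂ) * c = t ^ 2 * (normSq (exp (m p)) : ℂ) := by
        rw [hR]; push_cast; field_simp
      linear_combination (c : ℂ) * hz + t ^ 3 * hEs - t * NN ρ p * hRc
    exact mul_right_cancel₀ (mul_ne_zero (mul_ne_zero htc hNe) hcc) h2
  have hnz : z * conj z = R := by
    have h1 : ‖z ^ 2 * η‖ = R := by rw [hzη]; simp [abs_of_pos hR0]
    have h2 : ‖η‖ = 1 := by
      have h3 : ‖η‖ * ‖η‖ = 1 := by
        have := congrArg norm hη3
        simpa using this
      nlinarith [norm_nonneg η]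
    rw [norm_mul, h2, mul_one, norm_pow] at h1
    rw [mul_conj, normSq_eq_norm_sq, h1]
  have hz0 : z ≠ 0 := by
    rintro rfl
    simp at hzη
    exact hR0.ne (by exact_mod_cast hzη)
  have hcz : conj z = z * η := by
    apply mul_left_cancel₀ hz0
    rw [hnz, ← hzη]; ring
  rw [hcz, huη]; ring

theorem denP {e b : ℝ} (hb : 0 < b) {q : ℂ}
    (h : ‖(b : ℂ) * (q + I * s3 * b)‖ ≤ e * ‖(b : ℂ) + I * s3 * q‖) :
    (b : ℂ) + I * s3 * q ≠ 0 ∧ ‖psP b q‖ ≤ e := by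
  have hb' : (b : ℂ) ≠ 0 := by exact_mod_cast hb.ne'
  have h0 : (b : ℂ) + I * s3 * q ≠ 0 := by
    intro h0
    rw [h0, norm_zero, mul_zero, norm_le_zero_iff] at h
    have h1 : q + I * s3 * b = 0 := (mul_eq_zero.1 h).resolve_left hb'
    have : 4 * (b : ℂ) = 0 := by
      linear_combination h0 - I * s3 * h1 + b * (s3 ^ 2 * I_sq - s3c)
    exact hb' (by linear_combination this / 4)
  refine ⟨h0, ?_⟩
  rw [psP, norm_div, div_le_iff₀ (norm_pos_iff.2 h0)]
  exact h

theorem denM {e b : ℝ} (hb : 0 < b) {q : ℂ}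
    (h : ‖(b : ℂ) * (q - I * s3 * b)‖ ≤ e * ‖(b : ℂ) - I * s3 * q‖) :
    (b : ℂ) - I * s3 * q ≠ 0 ∧ ‖psM b q‖ ≤ e := by
  have hb' : (b : ℂ) ≠ 0 := by exact_mod_cast hb.ne'
  have h0 : (b : ℂ) - I * s3 * q ≠ 0 := by
    intro h0
    rw [h0, norm_zero, mul_zero, norm_le_zero_iff] at h
    have h1 : q - I * s3 * b = 0 := (mul_eq_zero.1 h).resolve_left hb'
    have : 4 * (b : ℂ) = 0 := by
      linear_combination h0 + I * s3 * h1 + b * (s3 ^ 2 * I_sq - s3c)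
    exact hb' (by linear_combination this / 4)
  refine ⟨h0, ?_⟩
  rw [psM, norm_div, div_le_iff₀ (norm_pos_iff.2 h0)]
  exact h

theorem ne_of_norm_le {e : ℝ} (he1 : e < 1) {x y : ℂ} (hy : y ≠ 0) (h : ‖x‖ ≤ e * ‖y‖) :
    x - y ≠ 0 := by
  intro h0
  rw [sub_eq_zero.1 h0] at h
  have := norm_pos_iff.2 hy
  nlinarith

/-- the domain -/
def Om (e b : ℝ) : Set ℂ := {q | ‖q‖ < e ∧
  ‖(b : ℂ) * (q + I * s3 * b)‖ < e * ‖(b : ℂ) + I * s3 * q‖ ∧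
  ‖(b : ℂ) * (q - I * s3 * b)‖ < e * ‖(b : ℂ) - I * s3 * q‖}
/-- the closed domain -/
def Oc (e b : ℝ) : Set ℂ := {q | ‖q‖ ≤ e ∧
  ‖(b : ℂ) * (q + I * s3 * b)‖ ≤ e * ‖(b : ℂ) + I * s3 * q‖ ∧
  ‖(b : ℂ) * (q - I * s3 * b)‖ ≤ e * ‖(b : ℂ) - I * s3 * q‖}

theorem Om_open (e b : ℝ) : IsOpen (Om e b) := by
  simp only [Om, Set.ofPred_and]
  refine IsOpen.inter (isOpen_lt ?_ ?_) (IsOpen.inter (isOpen_lt ?_ ?_) (isOpen_lt ?_ ?_)) <;> fun_prop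
theorem Oc_closed (e b : ℝ) : IsClosed (Oc e b) := by
  simp only [Oc, Set.ofPred_and]
  refine IsClosed.inter (isClosed_le ?_ ?_) (IsClosed.inter (isClosed_le ?_ ?_) (isClosed_le ?_ ?_)) <;> fun_prop
theorem Om_sub (e b : ℝ) : closure (Om e b) ⊆ Oc e b :=
  closure_minimal (fun _ h => ⟨h.1.le, h.2.1.le, h.2.2.le⟩) (Oc_closed e b)

/-- the denominator -/
noncomputable def Dn (ρ b : ℝ) (q : ℂ) : ℂ := (ρ * (q + b)) ^ 3 - (q - b) ^ 3

theorem Dn_ne {e b ρ : ℝ} (hb : 0 < b) (he1 : e < 1) 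
    (hρ : ρ * (1 + b) = 1 - b) {q : ℂ} (hq : q ∈ Oc e b) : Dn ρ b q ≠ 0 := by
  obtain ⟨h1, h2, h3⟩ := hq
  have hb' : (b : ℂ) ≠ 0 := by exact_mod_cast hb.ne'
  have k2 := ne_of_norm_le he1 (denP hb h2).1 h2
  have k3 := ne_of_norm_le he1 (denM hb h3).1 h3
  have k1 : 1 - q ≠ 0 := one_sub_ne (h1.trans_lt he1)
  have hρc : (ρ : ℂ) * (1 + b) = 1 - b := by exact_mod_cast hρ
  have hid : (1 + (b : ℂ)) ^ 3 * Dn ρ b q = 2 * b * (1 - q) *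
      ((b * (q + I * s3 * b) - (b + I * s3 * q)) * (b * (q - I * s3 * b) - (b - I * s3 * q))) := by
    have e1 : (b * (q + I * s3 * b) - (b + I * s3 * q)) * (b * (q - I * s3 * b) - (b - I * s3 * q)) =
        (b * q - b) ^ 2 + 3 * (b ^ 2 - q) ^ 2 := by
      linear_combination (b ^ 2 - q) ^ 2 * (-s3 ^ 2 * I_sq + s3c)
    have e2 : (1 + (b : ℂ)) ^ 3 * Dn ρ b q =
        ((1 - b) * (q + b)) ^ 3 - ((1 + b) * (q - b)) ^ 3 := by
      rw [← hρc, Dn]; ring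
    rw [e1, e2]; ring
  intro h
  rw [h, mul_zero] at hid
  exact (mul_ne_zero (mul_ne_zero (mul_ne_zero two_ne_zero hb') k1) (mul_ne_zero k2 k3)) hid.symm

theorem Es_diff {e b r : ℝ} {m : ℂ → ℂ} (hb : 0 < b) (hr : e < r)
    (hm : ∀ p ∈ Metric.ball (0 : ℂ) r, DifferentiableAt ℂ m p) {q : ℂ} (hq : q ∈ Oc e b) :
    DifferentiableAt ℂ (Es m b) q := by
  obtain ⟨h1, h2, h3⟩ := hq
  obtain ⟨k2, j2⟩ := denP hb h2
  obtain ⟨k3, j3⟩ := denM hb h3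
  have hB : ∀ x : ℂ, ‖x‖ ≤ e → DifferentiableAt ℂ m x := fun x hx => hm x (by
    rw [mem_ball_zero_iff]; linarith)
  have d1 : DifferentiableAt ℂ (psP b) q := by
    unfold psP; fun_prop (disch := assumption)
  have d2 : DifferentiableAt ℂ (psM b) q := by
    unfold psM; fun_prop (disch := assumption)
  have a1 := hB q h1
  have a2 := (hB _ j2).comp q d1
  have a3 := (hB _ j3).comp q d2
  exact ((a1.add a2).add a3).cexp

theorem Es_P {b : ℝ} {m : ℂ → ℂ} {q : ℂ} (hb : 0 < b) (h1 : (b : ℂ) + I * s3 * q ≠ 0)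
    (h2 : (b : ℂ) - I * s3 * q ≠ 0) : Es m b (psP b q) = Es m b q := by
  rw [Es, Es, psPP hb h1 h2, psMP hb h1]; congr 1; ring
theorem Es_M {b : ℝ} {m : ℂ → ℂ} {q : ℂ} (hb : 0 < b) (h1 : (b : ℂ) + I * s3 * q ≠ 0)
    (h2 : (b : ℂ) - I * s3 * q ≠ 0) : Es m b (psM b q) = Es m b q := by
  rw [Es, Es, psMM hb h1 h2, psPM hb h2]; congr 1; ring

theorem params {t : ℝ} (ht0 : 0 < t) (ht1 : t < Real.sqrt 3 / 2) :
    ∃ e : ℝ, 0 < e ∧ 3 * e ^ 2 < 1 ∧ t * (1 + e ^ 2) = 2 * e := by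
  have h3 : Real.sqrt 3 ^ 2 = 3 := Real.sq_sqrt (by norm_num)
  have ht : t ^ 2 < 3 / 4 := by nlinarith [Real.sqrt_nonneg 3]
  set s := Real.sqrt (1 - t ^ 2) with hs
  have hs2 : s ^ 2 = 1 - t ^ 2 := Real.sq_sqrt (by linarith)
  have hs0 : 0 ≤ s := Real.sqrt_nonneg _
  have hs1 : 1 / 2 < s := by nlinarith
  have hs3 : s < 1 := by nlinarith
  refine ⟨(1 - s) / t, div_pos (by linarith) ht0, ?_, ?_⟩
  · rw [div_pow, ← mul_div_assoc, div_lt_one (by positivity)]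
    nlinarith
  · field_simp
    nlinarith

theorem disc1 {t δ : ℝ} (ht0 : 0 < t) (ht1 : t < Real.sqrt 3 / 2) (hδ : 0 < δ) :
    ∃ (b : ℂ) (V : Set ℂ) (E τ : ℂ → ℂ) (c0 : ℝ), 0 < c0 ∧ IsOpen V ∧ b ∈ V ∧
      DifferentiableOn ℂ E V ∧ DifferentiableOn ℂ τ V ∧ E b ≠ 0 ∧ τ b ≠ 0 ∧
      ∀ q ∈ V, ∀ θ : ℂ, θ ^ 2 = (q - b) * τ q → ∀ c : ℝ, |c| ≤ c0 →
        ((c : ℂ) * θ * (q - b), (c : ℂ) ^ 3 * θ * (q - b) * E q) ∈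
          HH (Sset t ∩ eClosedBall δ) := by
  obtain ⟨e, he, he3, hte⟩ := params ht0 ht1
  obtain ⟨b, hbe⟩ : ∃ b, b = e ^ 2 := ⟨_, rfl⟩
  rw [← hbe] at he3 hte
  have hb : 0 < b := by rw [hbe]; positivity
  have he1 : e < 1 := by nlinarith
  obtain ⟨ρ, hρd⟩ : ∃ ρ, ρ = (1 - b) / (1 + b) := ⟨_, rfl⟩
  have hρ : ρ * (1 + b) = 1 - b := by rw [hρd]; field_simp
  have hρ0 : 0 < ρ := by rw [hρd]; exact div_pos (by linarith) (by linarith)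
  obtain ⟨r, hr0, hr1, hr2, m, c, hc, hmd, hmc, hme⟩ := exists_m hρ0 hb he3
  have hr : e < r := by rw [hbe] at hr1; exact lt_of_pow_lt_pow_left₀ 2 hr0.le hr1
  have hb' : (b : ℂ) ≠ 0 := by exact_mod_cast hb.ne'
  have htc : (t : ℂ) ≠ 0 := by exact_mod_cast ht0.ne'
  have hbl : b < e := by rw [hbe]; nlinarith
  have hOb : Bornology.IsBounded (Om e b) :=
    (Metric.isBounded_ball (x := (0 : ℂ)) (r := e)).subset fun q hq => by
      rw [mem_ball_zero_iff]; exact hq.1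
  have hbO : (b : ℂ) ∈ Om e b := by
    have n1 : ‖(1 : ℂ) + I * s3‖ > 0 := norm_pos_iff.2 om_ne.2
    have n2 : ‖(1 : ℂ) - I * s3‖ > 0 := norm_pos_iff.2 om_ne.1
    have nb : ‖(b : ℂ)‖ = b := by simp [abs_of_pos hb]
    refine ⟨by rw [nb]; exact hbl, ?_, ?_⟩
    · have a1 : (b : ℂ) + I * s3 * b = b * (1 + I * s3) := by ring
      rw [a1, norm_mul, norm_mul, nb]
      exact mul_lt_mul_of_pos_right hbl (by positivity)
    · have a1 : (b : ℂ) - I * s3 * b = b * (1 - I * s3) := by ring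
      rw [a1, norm_mul, norm_mul, nb]
      exact mul_lt_mul_of_pos_right hbl (by positivity)
  have hsub := Om_sub e b
  obtain ⟨E, hE⟩ : ∃ E : ℂ → ℂ, E = fun q => t ^ 2 / 3 * Es m b q := ⟨_, rfl⟩
  obtain ⟨τ, hτ⟩ : ∃ τ : ℂ → ℂ, τ = fun q => t ^ 3 * Es m b q / Dn ρ b q := ⟨_, rfl⟩
  have hEd : ∀ q ∈ Oc e b, DifferentiableAt ℂ E q := fun q hq => by
    rw [hE]; exact (Es_diff hb hr hmd hq).const_mul _
  have hτd : ∀ q ∈ Oc e b, DifferentiableAt ℂ τ q := fun q hq => by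
    rw [hτ]
    have d1 : DifferentiableAt ℂ (Dn ρ b) q := by unfold Dn; fun_prop
    exact ((Es_diff hb hr hmd hq).const_mul _).div d1 (Dn_ne hb he1 hρ hq)
  have hDc : ∀ f : ℂ → ℂ, (∀ q ∈ Oc e b, DifferentiableAt ℂ f q) → DiffContOnCl ℂ f (Om e b) :=
    fun f hf => DifferentiableOn.diffContOnCl fun q hq => (hf q (hsub hq)).differentiableWithinAt
  -- boundary points lie on the surface
  have hS : ∀ q ∈ frontier (Om e b), ∀ θ : ℂ, θ ^ 2 = (q - b) * τ q → ∀ c : ℝ,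
      ((c : ℂ) * θ * (q - b), (c : ℂ) ^ 3 * θ * (q - b) * E q) ∈ Sset t := by
    intro q hq θ hθ c'
    have hqc : q ∈ Oc e b := hsub hq.1
    have hqn : q ∉ Om e b := by
      have := hq.2
      rwa [(Om_open e b).interior_eq] at this
    have hqb : q - b ≠ 0 := by
      intro h; exact hqn (by rw [sub_eq_zero.1 h]; exact hbO)
    have hDn := Dn_ne hb he1 hρ hqc
    have hu3 : uq ρ b q ^ 3 - 1 = Dn ρ b q / (q - b) ^ 3 := by
      rw [uq, Dn]; field_simp
    set z := θ * (q - b) with hz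
    have hz2 : z ^ 2 * (uq ρ b q ^ 3 - 1) = t ^ 3 * Es m b q := by
      rw [hz, mul_pow, hθ, hτ, hu3]; field_simp
    obtain ⟨h1, h2, h3⟩ := hqc
    obtain ⟨k2, j2⟩ := denP hb h2
    obtain ⟨k3, j3⟩ := denM hb h3
    have hz3 : (z + t * conj z) ^ 3 = z ^ 3 * uq ρ b q ^ 3 := by
      rcases h1.eq_or_lt with h1' | h1'
      · rw [core he he1 hbe hρ hte hρ0 hr hc hmc hme h1' hqb hz2]; ring
      rcases h2.eq_or_lt with h2' | h2'
      · have hn : ‖psP b q‖ = e := by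
          rw [psP, norm_div, h2', mul_div_cancel_right₀ _ (norm_ne_zero_iff.2 k2)]
        obtain ⟨g1, g2⟩ := uqP (ρ := ρ) hb k2 hqb
        rw [core he he1 hbe hρ hte hρ0 hr hc hmc hme hn g1 (z := z)
          (by rw [g2, Es_P hb k2 k3]; exact hz2), mul_pow, g2]
      rcases h3.eq_or_lt with h3' | h3'
      · have hn : ‖psM b q‖ = e := by
          rw [psM, norm_div, h3', mul_div_cancel_right₀ _ (norm_ne_zero_iff.2 k3)]
        obtain ⟨g1, g2⟩ := uqM (ρ := ρ) hb k3 hqb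
        rw [core he he1 hbe hρ hte hρ0 hr hc hmc hme hn g1 (z := z)
          (by rw [g2, Es_M hb k2 k3]; exact hz2), mul_pow, g2]
      exact absurd ⟨h1', h2', h3'⟩ hqn
    refine ⟨c' * z, ?_⟩
    rw [hE, map_mul, conj_ofReal]
    refine Prod.ext (by simp only [hz]; ring) ?_
    have hw : z ^ 2 * conj z + (t : ℂ) * z * (conj z) ^ 2 + ((t : ℂ) ^ 2 / 3) * (conj z) ^ 3 =
        z * (t ^ 2 / 3 * Es m b q) := by
      apply mul_left_cancel₀ (mul_ne_zero three_ne_zero htc)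
      linear_combination hz3 + z * hz2
    simp only [mul_assoc (c' ^ 3 : ℂ) θ, ← hz]
    linear_combination -(c' : ℂ) ^ 3 * hw
  -- choice of c0
  have hcomp : IsCompact (closure (Om e b)) := hOb.isCompact_closure
  obtain ⟨M1, hM1⟩ := hcomp.exists_bound_of_continuousOn (f := fun q => (q - b) * τ q) (fun q hq =>
    (((differentiableAt_id.sub_const _).mul
      (hτd q (hsub hq))).continuousAt.continuousWithinAt))
  obtain ⟨M2, hM2⟩ := hcomp.exists_bound_of_continuousOn (f := E) (fun q hq =>
    ((hEd q (hsub hq)).continuousAt.continuousWithinAt))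
  have hbcl := subset_closure hbO
  have hM10 : 0 ≤ M1 := (norm_nonneg _).trans (hM1 b hbcl)
  have hM20 : 0 ≤ M2 := (norm_nonneg _).trans (hM2 b hbcl)
  obtain ⟨L, hL⟩ : ∃ L : ℝ, L = (M1 + 1) * 2 * (M2 + 1) := ⟨_, rfl⟩
  have hL0 : 0 < L := by rw [hL]; positivity
  obtain ⟨c0, hc00, hc01⟩ : ∃ c0 : ℝ, 0 < c0 ∧ c0 < min 1 (δ / (2 * L)) :=
    exists_between (lt_min one_pos (by positivity))
  have hc1 : c0 < 1 := hc01.trans_le (min_le_left _ _)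
  have hc2 : c0 * L ≤ δ / 2 := by
    have := (hc01.trans_le (min_le_right _ _)).le
    rw [le_div_iff₀ (by positivity)] at this
    linarith
  have hball : ∀ q ∈ frontier (Om e b), ∀ θ : ℂ, θ ^ 2 = (q - b) * τ q → ∀ c : ℝ, |c| ≤ c0 →
      ((c : ℂ) * θ * (q - b), (c : ℂ) ^ 3 * θ * (q - b) * E q) ∈ eClosedBall δ := by
    intro q hq θ hθ c' hc'
    have hθn : ‖θ‖ ≤ M1 + 1 := by
      have h1 : ‖θ‖ ^ 2 ≤ M1 := by rw [← norm_pow, hθ]; exact hM1 q hq.1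
      nlinarith [norm_nonneg θ]
    have hqn : ‖q - b‖ ≤ 2 := by
      refine (norm_sub_le _ _).trans ?_
      have := (hsub hq.1).1
      simp [abs_of_pos hb]
      linarith
    have hEn := hM2 q hq.1
    have hcc : ‖(c' : ℂ)‖ ≤ c0 := by simpa using hc'
    have hc3 : ‖(c' : ℂ)‖ ^ 3 ≤ c0 := by
      calc ‖(c' : ℂ)‖ ^ 3 ≤ c0 ^ 3 := by gcongr
        _ ≤ c0 := by nlinarith [sq_nonneg c0, mul_pos hc00 hc00]
    have n1 : ‖(c' : ℂ) * θ * (q - b)‖ ≤ c0 * L := by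
      rw [norm_mul, norm_mul, hL]
      calc _ ≤ c0 * (M1 + 1) * 2 := by gcongr
        _ = c0 * (M1 + 1) * 2 * 1 := by ring
        _ ≤ c0 * (M1 + 1) * 2 * (M2 + 1) := by gcongr; linarith
        _ = _ := by ring
    have n2 : ‖(c' : ℂ) ^ 3 * θ * (q - b) * E q‖ ≤ c0 * L := by
      rw [norm_mul, norm_mul, norm_mul, norm_pow, hL]
      calc _ ≤ c0 * (M1 + 1) * 2 * (M2 + 1) := by gcongr; linarith
        _ = _ := by ring
    show _ ^ 2 + _ ^ 2 ≤ δ ^ 2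
    have n1' := n1.trans hc2
    have n2' := n2.trans hc2
    have g1 := pow_le_pow_left₀ (norm_nonneg _) n1' 2
    have g2 := pow_le_pow_left₀ (norm_nonneg _) n2' 2
    nlinarith
  have hK : (Sset t ∩ eClosedBall δ).Nonempty := by
    refine ⟨(0, 0), ⟨0, by simp⟩, ?_⟩
    simp [eClosedBall]; positivity
  have hocl : Om e b ⊆ Oc e b := subset_closure.trans hsub
  have hEs0 : ∀ q, Es m b q ≠ 0 := fun q => Complex.exp_ne_zero _
  refine ⟨b, Om e b, E, τ, c0, hc00, Om_open e b, hbO,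
    fun q hq => (hEd q (hocl hq)).differentiableWithinAt,
    fun q hq => (hτd q (hocl hq)).differentiableWithinAt, ?_, ?_, ?_⟩
  · rw [hE]; exact mul_ne_zero (div_ne_zero (pow_ne_zero _ htc) three_ne_zero) (hEs0 _)
  · rw [hτ]
    exact div_ne_zero (mul_ne_zero (pow_ne_zero _ htc) (hEs0 _)) (Dn_ne hb he1 hρ (hocl hbO))
  · intro q hq θ hθ c' hc'
    have := HH_theta (Sset t ∩ eClosedBall δ) hK (A := fun q => c' * (q - b))
      (B := fun q => c' ^ 3 * (q - b) * E q) (D := fun q => (q - b) * τ q) hOb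
      (hDc _ fun q hq => by fun_prop)
      (hDc _ fun q hq => by have := hEd q hq; fun_prop)
      (hDc _ fun q hq => by have := hτd q hq; fun_prop)
      (fun q hq θ hθ => by
        have h1 := hS q hq θ hθ c'
        have h2 := hball q hq θ hθ c' hc'
        have h3 : ((c' : ℂ) * θ * (q - b), (c' : ℂ) ^ 3 * θ * (q - b) * E q) =
          (θ * (c' * (q - b)), θ * (c' ^ 3 * (q - b) * E q)) :=
          Prod.ext (by simp only; ring) (by simp only; ring)
        rw [h3] at h1 h2
        exact ⟨h1, h2⟩)
      (subset_closure hq) hθ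
    convert this using 2 <;> ring

theorem exists_sqrt {b : ℂ} {V : Set ℂ} {τ : ℂ → ℂ} (hV : IsOpen V) (hb : b ∈ V)
    (hτ : DifferentiableOn ℂ τ V) (hτ0 : τ b ≠ 0) :
    ∃ (R : ℝ) (σ : ℂ → ℂ), 0 < R ∧ Metric.ball b R ⊆ V ∧
      DifferentiableOn ℂ σ (Metric.ball b R) ∧ σ b ≠ 0 ∧
      ∀ q ∈ Metric.ball b R, σ q ^ 2 = τ q := by
  obtain ⟨s0, hs0⟩ := IsAlgClosed.exists_pow_nat_eq (τ b) (n := 2) (by norm_num)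
  have hs00 : s0 ≠ 0 := by rintro rfl; simp at hs0; exact hτ0 hs0.symm
  have hca : ContinuousAt (fun q => τ q / τ b) b :=
    ((hτ.differentiableAt (hV.mem_nhds hb)).div_const _).continuousAt
  have hmem : (fun q => τ q / τ b) ⁻¹' slitPlane ∈ nhds b := by
    apply hca.preimage_mem_nhds
    simp only [div_self hτ0]
    exact isOpen_slitPlane.mem_nhds one_mem_slitPlane
  obtain ⟨R, hR, hRs⟩ := Metric.mem_nhds_iff.1 (Filter.inter_mem hmem (hV.mem_nhds hb))
  refine ⟨R, fun q => s0 * exp (log (τ q / τ b) / 2), hR, fun q hq => (hRs hq).2, ?_, ?_, ?_⟩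
  · intro q hq
    have h1 : DifferentiableAt ℂ τ q := hτ.differentiableAt (hV.mem_nhds (hRs hq).2)
    have h2 : τ q / τ b ∈ slitPlane := (hRs hq).1
    exact ((((h1.div_const _).clog h2).div_const _).cexp.const_mul _).differentiableWithinAt
  · exact mul_ne_zero hs00 (Complex.exp_ne_zero _)
  · intro q hq
    have h2 : τ q / τ b ∈ slitPlane := (hRs hq).1
    rw [mul_pow, hs0, ← Complex.exp_nat_mul]
    have : ((2 : ℕ) : ℂ) * (log (τ q / τ b) / 2) = log (τ q / τ b) := by push_cast; ring
    rw [this, exp_log (slitPlane_ne_zero h2)]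
    field_simp

theorem disc2 {K : Set (ℂ × ℂ)} {b : ℂ} {R c0 : ℝ} {E σ : ℂ → ℂ}
    (hE : DifferentiableOn ℂ E (Metric.ball b R)) (hσ : DifferentiableOn ℂ σ (Metric.ball b R))
    (h : ∀ q ∈ Metric.ball b R, ∀ θ : ℂ, θ ^ 2 = (q - b) * σ q ^ 2 → ∀ c : ℝ, |c| ≤ c0 →
        ((c : ℂ) * θ * (q - b), (c : ℂ) ^ 3 * θ * (q - b) * E q) ∈ HH K) (hc0 : 0 < c0)
    {p v : ℂ} (hp : ‖p‖ ≤ 1) (hv : ‖v‖ ^ 2 < R) :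
    (p * (c0 / 2 * (1 + p) * v ^ 3 * σ (b + p * v ^ 2)),
      c0 ^ 3 / 8 * (1 + p) ^ 3 * v ^ 3 * σ (b + p * v ^ 2) * E (b + p * v ^ 2)) ∈ HH K := by
  have hmem : ∀ p : ℂ, ‖p‖ ≤ 1 → b + p * v ^ 2 ∈ Metric.ball b R := by
    intro p hp
    rw [mem_ball_iff_norm, add_sub_cancel_left, norm_mul, norm_pow]
    nlinarith [sq_nonneg ‖v‖]
  have hdc : ∀ f : ℂ → ℂ, (∀ p : ℂ, ‖p‖ ≤ 1 → DifferentiableAt ℂ f p) →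
      DiffContOnCl ℂ f (Metric.ball 0 1) := by
    intro f hf
    refine DifferentiableOn.diffContOnCl fun p hp => (hf p ?_).differentiableWithinAt
    rw [closure_ball _ one_ne_zero] at hp
    simpa using hp
  have hda : ∀ f : ℂ → ℂ, DifferentiableOn ℂ f (Metric.ball b R) → ∀ p : ℂ, ‖p‖ ≤ 1 →
      DifferentiableAt ℂ (fun p => f (b + p * v ^ 2)) p := by
    intro f hf p hp
    have h1 : DifferentiableAt ℂ f (b + p * v ^ 2) :=
      hf.differentiableAt (Metric.isOpen_ball.mem_nhds (hmem p hp))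
    exact h1.comp p (f := fun p => b + p * v ^ 2) (by fun_prop)
  refine HH_disc K (U := Metric.ball (0 : ℂ) 1)
    (f := fun p => p * (c0 / 2 * (1 + p) * v ^ 3 * σ (b + p * v ^ 2)))
    (g := fun p => c0 ^ 3 / 8 * (1 + p) ^ 3 * v ^ 3 * σ (b + p * v ^ 2) * E (b + p * v ^ 2))
    Metric.isBounded_ball (hdc _ fun p hp => ?_) (hdc _ fun p hp => ?_) ?_
    (by rw [closure_ball _ one_ne_zero]; simpa using hp)
  · have h1 := hda σ hσ p hp
    exact differentiableAt_id.mul (DifferentiableAt.mul (by fun_prop) h1)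
  · have h1 := hda σ hσ p hp
    have h2 := hda E hE p hp
    exact (DifferentiableAt.mul (by fun_prop) h1).mul h2
  · intro p hp
    rw [frontier_ball _ one_ne_zero] at hp
    have hp1 : ‖p‖ = 1 := by simpa using hp
    obtain ⟨s, hs⟩ := IsAlgClosed.exists_pow_nat_eq p (n := 2) (by norm_num)
    have hs1 : ‖s‖ = 1 := by
      have : ‖s‖ ^ 2 = 1 := by rw [← norm_pow, hs, hp1]
      nlinarith [norm_nonneg s]
    have hss : s * conj s = 1 := by rw [mul_conj, normSq_eq_norm_sq, hs1]; simp
    have hc : ((c0 * s.re : ℝ) : ℂ) * s = c0 / 2 * (1 + p) := by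
      have : ((2 * s.re : ℝ) : ℂ) = s + conj s := (add_conj s).symm
      push_cast at this ⊢
      rw [← hs]
      linear_combination (c0 : ℂ) * s / 2 * this + c0 / 2 * hss
    have := h (b + p * v ^ 2) (hmem p hp1.le) (s * v * σ (b + p * v ^ 2))
      (by rw [← hs]; ring) (c0 * s.re) (by
        rw [abs_mul, abs_of_pos hc0]
        have := (abs_re_le_norm s)
        rw [hs1] at this
        nlinarith)
    convert this using 2
    · generalize σ (b + p * v ^ 2) = x
      linear_combination -(p * v ^ 3 * x) * hc
    · generalize σ (b + p * v ^ 2) = x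
      generalize E (b + p * v ^ 2) = y
      generalize ((c0 * s.re : ℝ) : ℂ) = c at *
      have h3 : (c * s) ^ 3 = (c0 / 2 * (1 + p)) ^ 3 := by rw [hc]
      rw [add_sub_cancel_left, ← hs] at *
      linear_combination -(v ^ 3 * x * y) * h3

theorem nhds_HH {K : Set (ℂ × ℂ)} {b : ℂ} {R c0 : ℝ} {E σ : ℂ → ℂ} (hR : 0 < R)
    (hE : DifferentiableOn ℂ E (Metric.ball b R)) (hσ : DifferentiableOn ℂ σ (Metric.ball b R))
    (hE0 : E b ≠ 0) (hσ0 : σ b ≠ 0)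
    (h : ∀ q ∈ Metric.ball b R, ∀ θ : ℂ, θ ^ 2 = (q - b) * σ q ^ 2 → ∀ c : ℝ, |c| ≤ c0 →
        ((c : ℂ) * θ * (q - b), (c : ℂ) ^ 3 * θ * (q - b) * E q) ∈ HH K) (hc0 : 0 < c0)
    {v : ℂ} (hv : ‖v‖ ^ 2 < R) (hv0 : v ≠ 0) :
    HH K ∈ nhds ((0 : ℂ), c0 ^ 3 / 8 * v ^ 3 * σ b * E b) := by
  have hcc : (c0 : ℂ) ≠ 0 := by exact_mod_cast hc0.ne'
  have hbn : Metric.ball b R ∈ nhds b := Metric.ball_mem_nhds b hR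
  have aσ : AnalyticAt ℂ σ b := hσ.analyticAt hbn
  have aE : AnalyticAt ℂ E b := hE.analyticAt hbn
  have f1 : AnalyticAt ℂ (fun x : ℂ × ℂ => x.1) (0, v) := analyticAt_fst
  have f2 : AnalyticAt ℂ (fun x : ℂ × ℂ => x.2) (0, v) := analyticAt_snd
  have aκ : AnalyticAt ℂ (fun x : ℂ × ℂ => b + x.1 * x.2 ^ 2) (0, v) :=
    analyticAt_const.add (f1.mul (f2.pow 2))
  have aσκ : AnalyticAt ℂ (fun x : ℂ × ℂ => σ (b + x.1 * x.2 ^ 2)) (0, v) :=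
    AnalyticAt.comp_of_eq (g := σ) aσ aκ (by simp)
  have aEκ : AnalyticAt ℂ (fun x : ℂ × ℂ => E (b + x.1 * x.2 ^ 2)) (0, v) :=
    AnalyticAt.comp_of_eq (g := E) aE aκ (by simp)
  have aH : AnalyticAt ℂ (fun x : ℂ × ℂ => (c0 : ℂ) / 2 * (1 + x.1) * x.2 ^ 3 *
      σ (b + x.1 * x.2 ^ 2)) (0, v) :=
    ((analyticAt_const.mul (analyticAt_const.add f1)).mul (f2.pow 3)).mul aσκ
  have aW : AnalyticAt ℂ (fun x : ℂ × ℂ => (c0 : ℂ) ^ 3 / 8 * (1 + x.1) ^ 3 * x.2 ^ 3 *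
      σ (b + x.1 * x.2 ^ 2) * E (b + x.1 * x.2 ^ 2)) (0, v) :=
    (((analyticAt_const.mul ((analyticAt_const.add f1).pow 3)).mul (f2.pow 3)).mul aσκ).mul aEκ
  have d1 := (hasStrictFDerivAt_fst (𝕜 := ℂ) (p := ((0 : ℂ), v))).mul aH.hasStrictFDerivAt
  have d2 := aW.hasStrictFDerivAt
  have d := d1.prodMk d2
  generalize hL2 : fderiv ℂ (fun x : ℂ × ℂ => (c0 : ℂ) ^ 3 / 8 * (1 + x.1) ^ 3 * x.2 ^ 3 *
      σ (b + x.1 * x.2 ^ 2) * E (b + x.1 * x.2 ^ 2)) (0, v) = L2 at d d2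
  generalize fderiv ℂ (fun x : ℂ × ℂ => (c0 : ℂ) / 2 * (1 + x.1) * x.2 ^ 3 *
      σ (b + x.1 * x.2 ^ 2)) (0, v) = L1 at d d1
  have hβ : L2 (0, 1) = c0 ^ 3 / 8 * (3 * v ^ 2) * σ b * E b := by
    have k1 : HasDerivAt (fun y : ℂ => ((0 : ℂ), y)) (0, 1) v :=
      (hasDerivAt_const v (0 : ℂ)).prodMk (hasDerivAt_id v)
    have k2 := d2.hasFDerivAt.comp_hasDerivAt v k1
    have k3 : HasDerivAt (fun y : ℂ => (c0 : ℂ) ^ 3 / 8 * y ^ 3 * σ b * E b)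
        (c0 ^ 3 / 8 * (3 * v ^ 2) * σ b * E b) v := by
      have := ((((hasDerivAt_id v).pow 3).const_mul ((c0 : ℂ) ^ 3 / 8)).mul_const (σ b)).mul_const (E b)
      simpa using this
    refine k2.unique (k3.congr_of_eventuallyEq (Filter.Eventually.of_forall fun y => ?_))
    simp
  have hβ0 : L2 (0, 1) ≠ 0 := by
    rw [hβ]
    have h1 : (c0 : ℂ) ^ 3 / 8 ≠ 0 := div_ne_zero (pow_ne_zero _ hcc) (by norm_num)
    exact mul_ne_zero (mul_ne_zero (mul_ne_zero h1
      (mul_ne_zero three_ne_zero (pow_ne_zero _ hv0))) hσ0) hE0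
  have hsurj := d.map_nhds_eq_of_surj (by
    rw [LinearMap.range_eq_top]
    rintro ⟨x, y⟩
    have hα : (c0 : ℂ) / 2 * v ^ 3 * σ b ≠ 0 :=
      mul_ne_zero (mul_ne_zero (div_ne_zero hcc two_ne_zero) (pow_ne_zero _ hv0)) hσ0
    refine ⟨(x / ((c0 : ℂ) / 2 * v ^ 3 * σ b),
      (y - x / ((c0 : ℂ) / 2 * v ^ 3 * σ b) * L2 (1, 0)) / L2 (0, 1)), ?_⟩
    have hlin : ∀ p w : ℂ, L2 (p, w) = p * L2 (1, 0) + w * L2 (0, 1) := by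
      intro p w
      have : ((p, w) : ℂ × ℂ) = p • (1, 0) + w • (0, 1) := by simp
      rw [this, map_add, map_smul, map_smul]; rfl
    refine Prod.ext ?_ ?_
    · simp
      field_simp
    · simp
      rw [hlin]
      field_simp
      ring)
  have hN : {x : ℂ × ℂ | ‖x.1‖ < 1 ∧ ‖x.2‖ ^ 2 < R} ∈ nhds ((0 : ℂ), v) := by
    apply IsOpen.mem_nhds
    · simp only [Set.ofPred_and]
      exact (isOpen_lt (by fun_prop) (by fun_prop)).inter (isOpen_lt (by fun_prop) (by fun_prop))
    · exact ⟨by simp, hv⟩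
  have := Filter.image_mem_map hN (m := fun x : ℂ × ℂ => ((x.1 * ((c0 : ℂ) / 2 * (1 + x.1) * x.2 ^ 3 *
      σ (b + x.1 * x.2 ^ 2)), (c0 : ℂ) ^ 3 / 8 * (1 + x.1) ^ 3 * x.2 ^ 3 *
      σ (b + x.1 * x.2 ^ 2) * E (b + x.1 * x.2 ^ 2)) : ℂ × ℂ))
  have hs2 : Filter.map (fun x : ℂ × ℂ => ((x.1 * ((c0 : ℂ) / 2 * (1 + x.1) * x.2 ^ 3 *
      σ (b + x.1 * x.2 ^ 2)), (c0 : ℂ) ^ 3 / 8 * (1 + x.1) ^ 3 * x.2 ^ 3 *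
      σ (b + x.1 * x.2 ^ 2) * E (b + x.1 * x.2 ^ 2)) : ℂ × ℂ)) (nhds (0, v)) =
      nhds ((0 : ℂ), c0 ^ 3 / 8 * v ^ 3 * σ b * E b) := by
    refine hsurj.trans ?_
    simp
  rw [hs2] at this
  refine Filter.mem_of_superset this ?_
  rintro _ ⟨x, hx, rfl⟩
  exact disc2 hE hσ h hc0 hx.1.le hx.2

theorem stmt_8 (t : ℝ) (ht0 : 0 < t) (ht1 : t < Real.sqrt 3 / 2) (δ : ℝ) (hδ : 0 < δ) :
    ∃ ρ > (0 : ℝ), eOpenBall ρ ⊆ polyHull2 (Sset t ∩ eClosedBall δ) := by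
  obtain ⟨b, V, E, τ, c0, hc0, hV, hbV, hE, hτ, hE0, hτ0, h⟩ := disc1 ht0 ht1 hδ
  obtain ⟨R, σ, hR, hRV, hσ, hσ0, hστ⟩ := exists_sqrt hV hbV hτ hτ0
  set K := Sset t ∩ eClosedBall δ with hKd
  have hcc : (c0 : ℂ) ≠ 0 := by exact_mod_cast hc0.ne'
  have hK : Bornology.IsBounded K := by
    refine (Metric.isBounded_closedBall (x := (0 : ℂ × ℂ)) (r := δ)).subset ?_
    rintro ⟨z, w⟩ ⟨-, hzw⟩
    have hzw' : ‖z‖ ^ 2 + ‖w‖ ^ 2 ≤ δ ^ 2 := hzw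
    rw [mem_closedBall_zero_iff, Prod.norm_def]
    exact max_le (by nlinarith [norm_nonneg z, sq_nonneg ‖w‖])
      (by nlinarith [norm_nonneg w, sq_nonneg ‖z‖])
  obtain ⟨κ, hκ⟩ : ∃ κ : ℂ, κ = c0 ^ 3 / 8 * σ b * E b := ⟨_, rfl⟩
  have hκ0 : κ ≠ 0 := by
    rw [hκ]
    exact mul_ne_zero (mul_ne_zero (div_ne_zero (pow_ne_zero _ hcc) (by norm_num)) hσ0) hE0
  obtain ⟨r0, hr0, hr0R⟩ : ∃ r0 : ℝ, 0 < r0 ∧ r0 ^ 2 < R :=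
    ⟨Real.sqrt (R / 2), Real.sqrt_pos.2 (by linarith), by rw [Real.sq_sqrt (by linarith)]; linarith⟩
  obtain ⟨rr, hrr⟩ : ∃ rr : ℝ, rr = ‖κ‖ * r0 ^ 3 := ⟨_, rfl⟩
  have hrr0 : 0 < rr := by rw [hrr]; have := norm_pos_iff.2 hκ0; positivity
  have hint : ({(0 : ℂ)} : Set ℂ) ×ˢ Metric.sphere (0 : ℂ) rr ⊆ interior (HH K) := by
    rintro ⟨z, w⟩ ⟨hz, hw⟩
    have hz' : z = 0 := hz
    have hw' : ‖w‖ = rr := by simpa using hw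
    subst hz'
    obtain ⟨v, hv⟩ := IsAlgClosed.exists_pow_nat_eq (w / κ) (n := 3) (by norm_num)
    have hvn : ‖v‖ = r0 := by
      have h3 : ‖v‖ ^ 3 = r0 ^ 3 := by
        rw [← norm_pow, hv, norm_div, hw', hrr, mul_div_cancel_left₀ _ (norm_ne_zero_iff.2 hκ0)]
      exact (pow_left_inj₀ (norm_nonneg _) hr0.le (by norm_num)).1 h3
    have hv0 : v ≠ 0 := by rw [← norm_pos_iff, hvn]; exact hr0
    have := nhds_HH hR (hE.mono hRV) hσ hE0 hσ0 (K := K) (c0 := c0)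
      (fun q hq θ hθ => h q (hRV hq) θ (by rw [hθ, hστ q hq])) hc0 (v := v)
      (by rw [hvn]; exact hr0R) hv0
    rw [mem_interior_iff_mem_nhds]
    convert this using 3
    have : w = κ * v ^ 3 := by rw [hv]; field_simp
    rw [this, hκ]; ring
  obtain ⟨ε, hε, hεs⟩ := (isCompact_singleton.prod (isCompact_sphere (0 : ℂ) rr)).exists_thickening_subset_open
    isOpen_interior hint
  refine ⟨min ε rr, lt_min hε hrr0, fun x hx => HH_sub K hK ?_⟩
  obtain ⟨z, w⟩ := x
  have hx' : ‖z‖ ^ 2 + ‖w‖ ^ 2 < (min ε rr) ^ 2 := hx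
  have hm0 : 0 < min ε rr := lt_min hε hrr0
  have hz : ‖z‖ < ε := by
    refine lt_of_lt_of_le ?_ (min_le_left ε rr)
    exact lt_of_pow_lt_pow_left₀ 2 hm0.le (by nlinarith [sq_nonneg ‖w‖])
  have hw : ‖w‖ < rr := by
    refine lt_of_lt_of_le ?_ (min_le_right ε rr)
    exact lt_of_pow_lt_pow_left₀ 2 hm0.le (by nlinarith [sq_nonneg ‖z‖])
  refine HH_disc K (U := Metric.ball (0 : ℂ) rr) (f := fun _ => z) (g := fun w => w)
    Metric.isBounded_ball diffContOnCl_const differentiable_id.diffContOnCl ?_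
    (subset_closure (by simpa using hw))
  intro w' hw'
  rw [frontier_ball _ hrr0.ne'] at hw'
  apply interior_subset
  apply hεs
  rw [Metric.mem_thickening_iff]
  refine ⟨(0, w'), ⟨rfl, hw'⟩, ?_⟩
  simpa [Prod.dist_eq] using hz
end
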